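/- arXiv:2307.08497 — 2 statements merged into one kernel-verified Lean document; each statement's English description precedes it below -/
import Mathlib

section
/- Let 𝓗 be a minor-closed class of graphs, let c, k ∈ ℕ, and let X be a graph with X ∉ 𝓗. If a graph G contains a (≥ck)-subdivision of X as a c-quasi-geodesic subgraph, then the radial 𝓗-width of G is at least k/12. -/
open SimpleGraph

namespace RadialPaper

variable {V W N : Type*}

/-- The ball of radius `r` around a set `U` of vertices of `G`. -/
def ballSet (G : SimpleGraph V) (U : Set V) (r : ℕ) : Set V :=
  {v | ∃ u ∈ U, G.edist u v ≤ (r : ℕ∞)}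

/-- `G` has radius at most `r`: some vertex has distance at most `r` from every vertex.
The empty graph has radius `0`; a nonempty disconnected graph has radius `∞`, hence
satisfies `radiusLE` for no `r`. -/
def radiusLE (G : SimpleGraph V) (r : ℕ) : Prop :=
  Nonempty V → ∃ v : V, ∀ w : V, G.edist v w ≤ (r : ℕ∞)

/-- `(Hg, B)` is a graph-decomposition of `G` modelled on `Hg`. -/
def IsGraphDecomp (G : SimpleGraph V) (Hg : SimpleGraph N) (B : N → Set V) : Prop :=
  (∀ v : V, ∃ h : N, v ∈ B h) ∧
  (∀ ⦃u v : V⦄, G.Adj u v → ∃ h : N, u ∈ B h ∧ v ∈ B h) ∧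
  (∀ v : V, (Hg.induce {h : N | v ∈ B h}).Connected)

/-- A subgraph `X` of `G` is `c`-quasi-geodesic. -/
def IsQuasiGeodesic (G : SimpleGraph V) (X : G.Subgraph) (c : ℕ) : Prop :=
  ∀ u v : X.verts, X.coe.edist u v ≤ (c : ℕ∞) * G.edist (u : V) (v : V)

/-- The subgraph `Y` of `G` is a `(≥ k)`-subdivision of the graph `X`. -/
def IsSubdivGE (k : ℕ) (X : SimpleGraph W) {G : SimpleGraph V} (Y : G.Subgraph) : Prop :=
  ∃ (f : W → V) (p : ∀ ⦃u v : W⦄, X.Adj u v → G.Walk (f u) (f v)),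
    Function.Injective f ∧
    (∀ ⦃u v : W⦄ (h : X.Adj u v), (p h).IsPath) ∧
    (∀ ⦃u v : W⦄ (h : X.Adj u v), k + 1 ≤ (p h).length) ∧
    (∀ ⦃u v : W⦄ (h : X.Adj u v), p h.symm = (p h).reverse) ∧
    (∀ ⦃u v : W⦄ (h : X.Adj u v) (w : W), f w ∈ (p h).support → w = u ∨ w = v) ∧
    (∀ ⦃u v u' v' : W⦄ (h : X.Adj u v) (h' : X.Adj u' v'), s(u, v) ≠ s(u', v') →
      ∀ x : V, x ∈ (p h).support → x ∈ (p h').support →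
        (x = f u ∨ x = f v) ∧ (x = f u' ∨ x = f v')) ∧
    Y.verts = Set.range f ∪ {x : V | ∃ (u v : W) (h : X.Adj u v), x ∈ (p h).support} ∧
    Y.edgeSet = {e : Sym2 V | ∃ (u v : W) (h : X.Adj u v), e ∈ (p h).edges}

/-- `G` contains a `(≥ k)`-subdivision of `X` as a `c`-quasi-geodesic subgraph. -/
def ContainsQuasiGeodesicSubdivGE (G : SimpleGraph V) (k : ℕ) (X : SimpleGraph W) (c : ℕ) :
    Prop :=
  ∃ Y : G.Subgraph, IsSubdivGE k X Y ∧ IsQuasiGeodesic G Y c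

/-- `X` is a minor of `Hg`. -/
def IsMinorOf (X : SimpleGraph W) (Hg : SimpleGraph N) : Prop :=
  ∃ B : W → Set N, (∀ w, (B w).Nonempty) ∧ (∀ w, (Hg.induce (B w)).Connected) ∧
    (∀ ⦃w w' : W⦄, w ≠ w' → Disjoint (B w) (B w')) ∧
    (∀ ⦃w w' : W⦄, X.Adj w w' → ∃ a ∈ B w, ∃ b ∈ B w', Hg.Adj a b)

/-- A class of (finite) graphs, given on the canonical vertex sets `Fin n`, is minor-closed. -/
def MinorClosed (ℋ : ∀ n : ℕ, SimpleGraph (Fin n) → Prop) : Prop :=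
  ∀ ⦃m n : ℕ⦄ (X : SimpleGraph (Fin m)) (Hg : SimpleGraph (Fin n)),
    ℋ n Hg → IsMinorOf X Hg → ℋ m X

/-- The triangle `K³`. -/
def triangleGraph : SimpleGraph (Fin 3) := ⊤

/-- The claw `K_{1,3}`, with centre `0`. -/
def clawGraph : SimpleGraph (Fin 4) := SimpleGraph.fromRel (fun a _ => a = 0)

/-- The wrench graph: two adjacent vertices `0, 1` of degree three, with leaves `2,3` and
`4,5` respectively. -/
def wrenchGraph : SimpleGraph (Fin 6) :=
  SimpleGraph.fromRel (fun a b =>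
    (a = 0 ∧ b = 1) ∨ (a = 0 ∧ b = 2) ∨ (a = 0 ∧ b = 3) ∨ (a = 1 ∧ b = 4) ∨ (a = 1 ∧ b = 5))

/-- The star `K_{1,m}`, with centre `none`. -/
def starGraph (m : ℕ) : SimpleGraph (Option (Fin m)) :=
  SimpleGraph.fromRel (fun a _ => a = none)

/-- `Hg` is a disjoint union of paths: every connected component is a path. -/
def IsUnionOfPaths (Hg : SimpleGraph N) : Prop :=
  ∀ cc : Hg.ConnectedComponent, ∃ m : ℕ,
    Nonempty (Hg.induce cc.supp ≃g SimpleGraph.pathGraph m)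

/-- `Hg` is a disjoint union of cycles: every connected component is a cycle. -/
def IsUnionOfCycles (Hg : SimpleGraph N) : Prop :=
  ∀ cc : Hg.ConnectedComponent, ∃ m : ℕ, 3 ≤ m ∧
    Nonempty (Hg.induce cc.supp ≃g SimpleGraph.cycleGraph m)

/-- `Hg` is a subdivided star, i.e. a `(≥ 0)`-subdivision of some star `K_{1,m}`. -/
def IsSubdividedStar (Hg : SimpleGraph N) : Prop :=
  ∃ m : ℕ, IsSubdivGE 0 (starGraph m) (⊤ : Hg.Subgraph)

/-- `Hg` is a disjoint union of subdivided stars. -/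
def IsUnionOfSubdividedStars (Hg : SimpleGraph N) : Prop :=
  ∀ cc : Hg.ConnectedComponent, IsSubdividedStar (Hg.induce cc.supp)

/-- A graph-decomposition is honest: bags of adjacent nodes intersect. -/
def Honest (Hg : SimpleGraph N) (B : N → Set V) : Prop :=
  ∀ ⦃h h' : N⦄, Hg.Adj h h' → (B h ∩ B h').Nonempty

/-- The outer-radial width of a decomposition of `G` is at most `r`. -/
def OuterRadialWidthLE (G : SimpleGraph V) (B : N → Set V) (r : ℕ) : Prop :=
  ∀ h : N, ∃ z : V, ∀ v ∈ B h, G.edist z v ≤ (r : ℕ∞)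

/-- The radial spread of a decomposition `(Hg, B)` of a graph with vertex set `V`
is at most `r`. -/
def RadialSpreadLE (Hg : SimpleGraph N) (B : N → Set V) (r : ℕ) : Prop :=
  ∀ v : V, radiusLE (Hg.induce {h : N | v ∈ B h}) r

/-- `φ` is an `(m, a, M, A, r)`-quasi-isometry from `Hg` to `G`. -/
def IsQuasiIsometry (Hg : SimpleGraph N) (G : SimpleGraph V) (m a M A r : ℕ)
    (φ : N → V) : Prop :=
  (∀ h h' : N, Hg.edist h h' ≤ (m : ℕ∞) * G.edist (φ h) (φ h') + (a : ℕ∞)) ∧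
  (∀ h h' : N, G.edist (φ h) (φ h') ≤ (M : ℕ∞) * Hg.edist h h' + (A : ℕ∞)) ∧
  (∀ v : V, ∃ h : N, G.edist v (φ h) ≤ (r : ℕ∞))

/-- `C` is a connected component of `G - S`: a maximal connected set of vertices
disjoint from `S`. -/
def IsCompOf (G : SimpleGraph V) (C S : Set V) : Prop :=
  C.Nonempty ∧ Disjoint C S ∧ (G.induce C).Connected ∧
  ∀ D : Set V, C ⊆ D → Disjoint D S → (G.induce D).Connected → D = C

/-- The subgraph `P` of `G` is an `M₀`–`M₁` path meeting `C`. -/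
def IsM01Path (G : SimpleGraph V) (M₀ M₁ C : Set V) (P : G.Subgraph) : Prop :=
  ∃ (x y : V) (q : G.Walk x y), q.IsPath ∧ q.toSubgraph = P ∧ x ∈ M₀ ∧ y ∈ M₁ ∧
    (∀ z ∈ q.support, z ≠ x → z ≠ y → z ∉ M₀ ∪ M₁) ∧ ∃ z ∈ q.support, z ∈ C

/-- The number of `M₀`–`M₁` paths meeting `C` that are contained in the subgraph `OS`. -/
noncomputable def Wcount (G : SimpleGraph V) (M₀ M₁ C : Set V) (OS : G.Subgraph) : ℕ :=
  Set.ncard {P : G.Subgraph | P ≤ OS ∧ IsM01Path G M₀ M₁ C P}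

/-!
Suppose that the bags have radius at most `r` with `6 * r ≤ k`, and let `Y` be the subdivision.
Two vertices of `Y` in a common bag have distance at most `2 * r` in `G`, hence at most
`E = 2 * c * r` in `Y`, and `3 * E ≤ c * k` is less than the length of every branch path. For a
vertex `w` of `X` let `T w` be the set of nodes whose bags meet the ball of radius `E` in `Y`
around the branch vertex of `w`, and for an edge `e` of `X` let `C e` be the set of nodes whose
bags meet the branch path of `e`. These sets are connected. Since distinct branch vertices have
distance more than `3 * E` in `Y`, the sets `T w` are pairwise disjoint and `C e` meets `T w` only
if `w` is an end of `e`. A path of length at most `E` in `Y` between two distinct branch paths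
passes through an end of the first one, so `C e` and `C e'` intersect only inside the sets `T w`.
Adding to each `T w` suitable parts of the sets `C e` at `w` thus yields a minor model of `X` in
the decomposition graph.
-/

/-! ### Connected vertex sets -/

theorem exists_walk_of_connected_induce {G : SimpleGraph V} {S : Set V}
    (hS : (G.induce S).Connected) {a b : V} (ha : a ∈ S) (hb : b ∈ S) :
    ∃ q : G.Walk a b, ∀ z ∈ q.support, z ∈ S := by
  obtain ⟨q⟩ := hS.preconnected ⟨a, ha⟩ ⟨b, hb⟩
  refine ⟨q.map (Embedding.induce S).toHom, fun z hz => ?_⟩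
  obtain ⟨y, -, rfl⟩ := List.mem_map.1 (Walk.support_map _ q ▸ hz)
  exact y.2

theorem connected_induce_of_forall_exists_walk {G : SimpleGraph V} {S : Set V} {a : V}
    (ha : a ∈ S) (hS : ∀ b ∈ S, ∃ q : G.Walk a b, ∀ z ∈ q.support, z ∈ S) :
    (G.induce S).Connected := by
  refine G.induce_connected_of_patches a ha fun {b} hb => ?_
  obtain ⟨q, hq⟩ := hS b hb
  exact ⟨{z | z ∈ q.support}, hq, q.start_mem_support, q.end_mem_support,
    q.connected_induce_support.preconnected _ _⟩

theorem connected_induce_union_iUnion {G : SimpleGraph V} {ι : Type*} {S : Set V} {D : ι → Set V}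
    (hS : (G.induce S).Connected) (hD : ∀ i, (G.induce (D i)).Connected)
    (hDS : ∀ i, (D i ∩ S).Nonempty) : (G.induce (S ∪ ⋃ i, D i)).Connected := by
  obtain ⟨⟨a, ha⟩⟩ := hS.nonempty
  refine connected_induce_of_forall_exists_walk (Or.inl ha) fun b hb => ?_
  rcases hb with hb | hb
  · obtain ⟨q, hq⟩ := exists_walk_of_connected_induce hS ha hb
    exact ⟨q, fun z hz => Or.inl (hq z hz)⟩
  · obtain ⟨i, hb⟩ := Set.mem_iUnion.1 hb
    obtain ⟨d, hd, hdS⟩ := hDS i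
    obtain ⟨q, hq⟩ := exists_walk_of_connected_induce hS ha hdS
    obtain ⟨q', hq'⟩ := exists_walk_of_connected_induce (hD i) hd hb
    refine ⟨q.append q', fun z hz => ?_⟩
    exact ((Walk.mem_support_append_iff ..).1 hz).imp (hq z)
      fun hz => Set.mem_iUnion.2 ⟨i, hq' z hz⟩

theorem exists_walk_disjoint_of_walk {G : SimpleGraph V} {T : Set V} {a b : V} (q : G.Walk a b)
    (ha : a ∉ T) (hb : b ∈ T) :
    ∃ (x : V) (p : G.Walk a x), (∀ z ∈ p.support, z ∈ q.support ∧ z ∉ T) ∧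
      ∃ y ∈ T, G.Adj x y := by
  induction q with
  | nil => exact absurd hb ha
  | @cons a d b had q ih =>
    by_cases hd : d ∈ T
    · exact ⟨a, Walk.nil, by simpa using ha, d, hd, had⟩
    · obtain ⟨x, p, hp, hx⟩ := ih hd hb
      refine ⟨x, p.cons had, fun z hz => ?_, hx⟩
      rcases List.mem_cons.1 hz with rfl | hz
      · exact ⟨List.mem_cons_self, ha⟩
      · exact ⟨List.mem_cons_of_mem _ (hp z hz).1, (hp z hz).2⟩

theorem exists_connected_subset_diff_adj {G : SimpleGraph V} {C S T : Set V}
    (hC : (G.induce C).Connected) (hCS : (C ∩ S).Nonempty) (hCT : (C ∩ T).Nonempty)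
    (hST : Disjoint S T) :
    ∃ D ⊆ C \ T, (G.induce D).Connected ∧ (D ∩ S).Nonempty ∧ ∃ x ∈ D, ∃ y ∈ T, G.Adj x y := by
  obtain ⟨a, haC, haS⟩ := hCS
  obtain ⟨b, hbC, hbT⟩ := hCT
  obtain ⟨q, hq⟩ := exists_walk_of_connected_induce hC haC hbC
  obtain ⟨x, p, hp, hx⟩ := exists_walk_disjoint_of_walk q (hST.notMem_of_mem_left haS) hbT
  exact ⟨{z | z ∈ p.support}, fun z hz => ⟨hq z (hp z hz).1, (hp z hz).2⟩,
    p.connected_induce_support, ⟨a, p.start_mem_support, haS⟩, x, p.end_mem_support, hx⟩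

/-! ### Minor models from overlapping connected sets -/

theorem isMinorOf_of_connected_extensions [LinearOrder W] {X : SimpleGraph W} {H : SimpleGraph N}
    {T : W → Set N} {D : ∀ u v, X.Adj u v → Set N}
    (hT : ∀ w, (H.induce (T w)).Connected) (hTT : Pairwise (Function.onFun Disjoint T))
    (hD : ∀ u v h, (H.induce (D u v h)).Connected)
    (hDT : ∀ u v h, (D u v h ∩ T u).Nonempty)
    (hadj : ∀ u v h, ∃ x ∈ D u v h, ∃ y ∈ T v, H.Adj x y)
    (hDT' : ∀ u v h, ∀ w ≠ u, Disjoint (D u v h) (T w))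
    (hDD : ∀ u v h u' v' h', u < v → u' < v' → u ≠ u' → Disjoint (D u v h) (D u' v' h')) :
    IsMinorOf X H := by
  let A (u : W) : Set N := T u ∪ ⋃ v : {v // X.Adj u v ∧ u < v}, D u v v.2.1
  have hA (u : W) : (H.induce (A u)).Connected :=
    connected_induce_union_iUnion (hT u) (fun v => hD u v v.2.1) fun v => hDT u v v.2.1
  have adj_of_lt {u v} (h : X.Adj u v) (huv : u < v) : ∃ a ∈ A u, ∃ b ∈ A v, H.Adj a b := by
    obtain ⟨x, hx, y, hy, hxy⟩ := hadj u v h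
    exact ⟨x, Or.inr (Set.mem_iUnion.2 ⟨⟨v, h, huv⟩, hx⟩), y, Or.inl hy, hxy⟩
  refine ⟨A, fun w => Set.nonempty_coe_sort.1 (hA w).nonempty, hA, fun u u' hne => ?_,
    fun u v h => ?_⟩
  · simp only [A, Set.disjoint_union_left, Set.disjoint_union_right, Set.disjoint_iUnion_left,
      Set.disjoint_iUnion_right]
    exact ⟨⟨hTT hne, fun v => hDT' u v v.2.1 u' hne.symm⟩, fun v' =>
      ⟨(hDT' u' v' v'.2.1 u hne).symm, fun v => hDD _ _ _ _ _ _ v.2.2 v'.2.2 hne⟩⟩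
  · rcases h.ne.lt_or_gt with huv | hvu
    · exact adj_of_lt h huv
    · obtain ⟨a, ha, b, hb, hab⟩ := adj_of_lt h.symm hvu
      exact ⟨b, hb, a, ha, hab.symm⟩

theorem isMinorOf_of_connected_sets {X : SimpleGraph W} {H : SimpleGraph N}
    {T : W → Set N} {C : Sym2 W → Set N}
    (hT : ∀ w, (H.induce (T w)).Connected) (hTT : Pairwise (Function.onFun Disjoint T))
    (hC : ∀ e ∈ X.edgeSet, (H.induce (C e)).Connected)
    (hCT : ∀ e ∈ X.edgeSet, ∀ w ∈ e, (C e ∩ T w).Nonempty)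
    (hCT' : ∀ e ∈ X.edgeSet, ∀ w ∉ e, Disjoint (C e) (T w))
    (hCC : ∀ e ∈ X.edgeSet, ∀ e' ∈ X.edgeSet, e ≠ e' → C e ∩ C e' ⊆ ⋃ w, T w) :
    IsMinorOf X H := by
  let _ : LinearOrder W := IsWellOrder.linearOrder WellOrderingRel
  choose D hDC hD hDT hadj using fun (u v : W) (h : X.Adj u v) =>
    exists_connected_subset_diff_adj (hC s(u, v) h) (hCT _ h u (Sym2.mem_mk_left u v))
      (hCT _ h v (Sym2.mem_mk_right u v)) (hTT h.ne)
  have disjoint_D_T (u v : W) (h : X.Adj u v) (w : W) (hwu : w ≠ u) : Disjoint (D u v h) (T w) := by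
    rcases eq_or_ne w v with rfl | hwv
    · exact Set.disjoint_of_subset_left (hDC u w h) Set.disjoint_sdiff_left
    · exact (hCT' _ h w (by simp [hwu, hwv])).mono_left ((hDC u v h).trans Set.sdiff_subset)
  refine isMinorOf_of_connected_extensions hT hTT hD hDT hadj disjoint_D_T ?_
  intro u v h u' v' h' huv huv' hne
  rw [Set.disjoint_left]
  intro x hx hx'
  have hs : s(u, v) ≠ s(u', v') := by
    rw [Ne, Sym2.eq_iff]
    rintro (⟨rfl, -⟩ | ⟨rfl, rfl⟩)
    exacts [hne rfl, huv.asymm huv']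
  obtain ⟨w, hw⟩ := Set.mem_iUnion.1 (hCC _ h _ h' hs ⟨(hDC _ _ h hx).1, (hDC _ _ h' hx').1⟩)
  have eq_of_mem_D {u v} (h : X.Adj u v) (hx : x ∈ D u v h) : w = u := by
    by_contra hwu
    exact (disjoint_D_T u v h w hwu).notMem_of_mem_left hx hw
  exact hne ((eq_of_mem_D h hx).symm.trans (eq_of_mem_D h' hx'))

/-! ### Graph-decompositions -/

/-- The nodes of a decomposition with bags `B` whose bag meets the vertex set `A`. -/
def nodesMeeting (B : N → Set V) (A : Set V) : Set N := {h | (B h ∩ A).Nonempty}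

theorem nodesMeeting_singleton (B : N → Set V) (a : V) : nodesMeeting B {a} = {h | a ∈ B h} := by
  simp only [nodesMeeting, Set.inter_singleton_nonempty]

theorem nodesMeeting_insert (B : N → Set V) (a : V) (A : Set V) :
    nodesMeeting B (insert a A) = nodesMeeting B {a} ∪ nodesMeeting B A := by
  simp only [nodesMeeting, Set.insert_eq, Set.inter_union_distrib_left, Set.union_nonempty,
    Set.ofPred_or]

theorem nodesMeeting_mono (B : N → Set V) {A A' : Set V} (h : A ⊆ A') :
    nodesMeeting B A ⊆ nodesMeeting B A' :=
  fun _ hA => hA.mono (Set.inter_subset_inter_right _ h)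

namespace IsGraphDecomp

variable {G : SimpleGraph V} {H : SimpleGraph N} {B : N → Set V}

theorem connected_induce_nodesMeeting_support (hD : IsGraphDecomp G H B) {a b : V}
    (q : G.Walk a b) : (H.induce (nodesMeeting B {z | z ∈ q.support})).Connected := by
  induction q with
  | @nil a =>
    have hsupp : {z | z ∈ (Walk.nil : G.Walk a a).support} = {a} := by
      ext z; simp
    rw [hsupp, nodesMeeting_singleton]
    exact hD.2.2 a
  | @cons a d b had q ih =>
    obtain ⟨h, ha, hd⟩ := hD.2.1 had
    have hsupp : {z | z ∈ (q.cons had).support} = insert a {z | z ∈ q.support} := by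
      ext z; simp
    rw [hsupp, nodesMeeting_insert, nodesMeeting_singleton]
    exact induce_union_connected (hD.2.2 a).preconnected ih.preconnected
      ⟨h, ha, d, hd, q.start_mem_support⟩

theorem connected_induce_nodesMeeting (hD : IsGraphDecomp G H B) {A : Set V}
    (hA : (G.induce A).Connected) : (H.induce (nodesMeeting B A)).Connected := by
  obtain ⟨⟨a, ha⟩⟩ := hA.nonempty
  obtain ⟨h, hah⟩ := hD.1 a
  refine connected_induce_of_forall_exists_walk (a := h) ⟨a, hah, ha⟩ ?_
  rintro h' ⟨b, hbh', hb⟩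
  obtain ⟨q, hq⟩ := exists_walk_of_connected_induce hA ha hb
  obtain ⟨p, hp⟩ := exists_walk_of_connected_induce (hD.connected_induce_nodesMeeting_support q)
    ⟨a, hah, q.start_mem_support⟩ ⟨b, hbh', q.end_mem_support⟩
  exact ⟨p, fun z hz => nodesMeeting_mono B hq (hp z hz)⟩

theorem nodesMeeting_inter_nonempty (hD : IsGraphDecomp G H B) {A A' : Set V} {a : V}
    (ha : a ∈ A) (ha' : a ∈ A') : (nodesMeeting B A ∩ nodesMeeting B A').Nonempty := by
  obtain ⟨h, hh⟩ := hD.1 a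
  exact ⟨h, ⟨a, hh, ha⟩, ⟨a, hh, ha'⟩⟩

end IsGraphDecomp

/-! ### Distances and balls -/

theorem exists_walk_length_le_of_edist_le {G : SimpleGraph V} {a b : V} {n : ℕ}
    (h : G.edist a b ≤ n) : ∃ q : G.Walk a b, q.length ≤ n := by
  obtain ⟨q, hq⟩ := exists_walk_of_edist_ne_top (ne_top_of_le_ne_top (ENat.natCast_ne_top n) h)
  exact ⟨q, by exact_mod_cast hq.trans_le h⟩

theorem edist_map_le {G : SimpleGraph V} {H : SimpleGraph W} (φ : G →g H) (a b : V) :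
    H.edist (φ a) (φ b) ≤ G.edist a b :=
  le_iInf fun q => (edist_le (q.map φ)).trans_eq (by rw [Walk.length_map])

theorem edist_add_edist_le_length {G : SimpleGraph V} {a b z : V} {q : G.Walk a b}
    (hz : z ∈ q.support) : G.edist a z + G.edist z b ≤ q.length := by
  classical
  calc G.edist a z + G.edist z b
      ≤ (q.takeUntil z hz).length + (q.dropUntil z hz).length :=
        add_le_add (edist_le _) (edist_le _)
    _ = q.length := by rw [← Nat.cast_add, ← Walk.length_append, Walk.take_spec]

theorem mem_ballSet_singleton {G : SimpleGraph V} {a x : V} {n : ℕ} :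
    x ∈ ballSet G {a} n ↔ G.edist a x ≤ n := by
  simp only [ballSet, Set.mem_singleton_iff, exists_eq_left, Set.mem_ofPred_eq]

theorem center_mem_ballSet (G : SimpleGraph V) (a : V) (n : ℕ) : a ∈ ballSet G {a} n :=
  mem_ballSet_singleton.2 (by simp)

theorem connected_induce_ballSet_singleton (G : SimpleGraph V) (a : V) (n : ℕ) :
    (G.induce (ballSet G {a} n)).Connected := by
  refine connected_induce_of_forall_exists_walk (center_mem_ballSet G a n) fun b hb => ?_
  obtain ⟨q, hq⟩ := exists_walk_length_le_of_edist_le (mem_ballSet_singleton.1 hb)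
  refine ⟨q, fun z hz => mem_ballSet_singleton.2 ?_⟩
  calc G.edist a z ≤ G.edist a z + G.edist z b := le_self_add
    _ ≤ q.length := edist_add_edist_le_length hz
    _ ≤ n := by exact_mod_cast hq

theorem ballSet_spanningCoe_subset_verts {G : SimpleGraph V} {Y : G.Subgraph} {a : V}
    (ha : a ∈ Y.verts) (n : ℕ) : ballSet Y.spanningCoe {a} n ⊆ Y.verts := by
  intro x hx
  obtain ⟨q, -⟩ := exists_walk_length_le_of_edist_le (mem_ballSet_singleton.1 hx)
  cases q.reverse with
  | nil => exact ha
  | cons h _ => exact Y.edge_vert h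

theorem edist_le_of_radiusLE_induce {G : SimpleGraph V} {A : Set V} {r : ℕ}
    (hA : radiusLE (G.induce A) r) {x y : V} (hx : x ∈ A) (hy : y ∈ A) :
    G.edist x y ≤ 2 * r := by
  obtain ⟨z, hz⟩ := hA ⟨⟨x, hx⟩⟩
  have hzA (v : A) : G.edist z v ≤ r :=
    (edist_map_le (Embedding.induce A).toHom z v).trans (hz v)
  calc G.edist x y ≤ G.edist x z + G.edist z y := SimpleGraph.edist_triangle
    _ ≤ r + r := add_le_add (edist_comm.trans_le (hzA ⟨x, hx⟩)) (hzA ⟨y, hy⟩)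
    _ = 2 * r := (two_mul _).symm

/-- Every bag has a trace on `Y` of diameter at most `E`, where distances are measured in the
subgraph `Y` itself. -/
def TraceDiamLE {G : SimpleGraph V} (Y : G.Subgraph) (B : N → Set V) (E : ℕ) : Prop :=
  ∀ ⦃h : N⦄ ⦃x y : V⦄, x ∈ Y.verts → y ∈ Y.verts → x ∈ B h → y ∈ B h →
    Y.spanningCoe.edist x y ≤ E

theorem IsQuasiGeodesic.traceDiamLE {G : SimpleGraph V} {Y : G.Subgraph} {B : N → Set V}
    {c r : ℕ} (hY : IsQuasiGeodesic G Y c) (hB : ∀ h, radiusLE (G.induce (B h)) r) :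
    TraceDiamLE Y B (c * (2 * r)) := by
  intro h x y hx hy hxB hyB
  let φ : Y.coe →g Y.spanningCoe := ⟨Subtype.val, id⟩
  calc Y.spanningCoe.edist x y ≤ Y.coe.edist ⟨x, hx⟩ ⟨y, hy⟩ := edist_map_le φ ⟨x, hx⟩ ⟨y, hy⟩
    _ ≤ c * G.edist x y := hY ⟨x, hx⟩ ⟨y, hy⟩
    _ ≤ c * (2 * r) := by gcongr; exact edist_le_of_radiusLE_induce (hB h) hxB hyB
    _ = (c * (2 * r) : ℕ) := by push_cast; rfl

/-! ### Subdivisions -/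

/-- The branch vertices and branch paths of a `(≥ k)`-subdivision `Y` of `X`, that is, the data
whose existence `IsSubdivGE k X Y` asserts. -/
structure Subdivision (k : ℕ) (X : SimpleGraph W) {G : SimpleGraph V} (Y : G.Subgraph) where
  branch : W → V
  path : ∀ ⦃u v : W⦄, X.Adj u v → G.Walk (branch u) (branch v)
  branch_injective : Function.Injective branch
  isPath : ∀ ⦃u v : W⦄ (h : X.Adj u v), (path h).IsPath
  lt_length : ∀ ⦃u v : W⦄ (h : X.Adj u v), k < (path h).length
  path_symm : ∀ ⦃u v : W⦄ (h : X.Adj u v), path h.symm = (path h).reverse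
  eq_or_eq_of_branch_mem : ∀ ⦃u v : W⦄ (h : X.Adj u v) (w : W),
    branch w ∈ (path h).support → w = u ∨ w = v
  eq_branch_of_mem_of_mem : ∀ ⦃u v u' v' : W⦄ (h : X.Adj u v) (h' : X.Adj u' v'),
    s(u, v) ≠ s(u', v') → ∀ x ∈ (path h).support, x ∈ (path h').support →
      x = branch u ∨ x = branch v
  verts_eq : Y.verts =
    Set.range branch ∪ {x : V | ∃ (u v : W) (h : X.Adj u v), x ∈ (path h).support}
  edgeSet_eq : Y.edgeSet = {e : Sym2 V | ∃ (u v : W) (h : X.Adj u v), e ∈ (path h).edges}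

theorem IsSubdivGE.nonempty_subdivision {k : ℕ} {X : SimpleGraph W} {G : SimpleGraph V}
    {Y : G.Subgraph} (hY : IsSubdivGE k X Y) : Nonempty (Subdivision k X Y) := by
  obtain ⟨f, p, hf, hpath, hlen, hsymm, hbranch, hinter, hverts, hedges⟩ := hY
  exact ⟨⟨f, p, hf, hpath, hlen, hsymm, hbranch,
    fun _ _ _ _ h h' hne x hx hx' => (hinter h h' hne x hx hx').1, hverts, hedges⟩⟩

namespace Subdivision

variable {k : ℕ} {X : SimpleGraph W} {G : SimpleGraph V} {Y : G.Subgraph} (S : Subdivision k X Y)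

theorem branch_mem_verts (w : W) : S.branch w ∈ Y.verts :=
  S.verts_eq ▸ Or.inl ⟨w, rfl⟩

theorem exists_path_adj {a b : V} (hab : Y.Adj a b) :
    ∃ (u v : W) (h : X.Adj u v), (S.path h).toSubgraph.Adj a b := by
  have hmem : s(a, b) ∈ Y.edgeSet := hab
  rw [S.edgeSet_eq] at hmem
  obtain ⟨u, v, h, he⟩ := hmem
  exact ⟨u, v, h, Walk.adj_toSubgraph_iff_mem_edges.2 he⟩

theorem toSubgraph_path_symm {u v : W} (h : X.Adj u v) :
    (S.path h.symm).toSubgraph = (S.path h).toSubgraph := by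
  rw [S.path_symm, Walk.toSubgraph_reverse]

theorem toSubgraph_path_eq {u v u' v' : W} (h : X.Adj u v) (h' : X.Adj u' v')
    (hs : s(u, v) = s(u', v')) : (S.path h).toSubgraph = (S.path h').toSubgraph := by
  rcases Sym2.eq_iff.1 hs with ⟨rfl, rfl⟩ | ⟨rfl, rfl⟩
  · rfl
  · exact S.toSubgraph_path_symm h'

/-- The vertex set of the branch path of the edge `e`, in either of its two orientations; it is
empty if `e` is not an edge of `X`. -/
def pathSet (e : Sym2 W) : Set V :=
  {x | ∃ (u v : W) (h : X.Adj u v), s(u, v) = e ∧ x ∈ (S.path h).support}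

theorem pathSet_mk {u v : W} (h : X.Adj u v) :
    S.pathSet s(u, v) = {x | x ∈ (S.path h).support} := by
  ext x
  refine ⟨?_, fun hx => ⟨u, v, h, rfl, hx⟩⟩
  rintro ⟨u', v', h', hs, hx⟩
  rw [← Walk.mem_verts_toSubgraph] at hx
  rwa [Set.mem_ofPred_eq, ← Walk.mem_verts_toSubgraph, ← S.toSubgraph_path_eq h' h hs]

theorem pathSet_subset_verts (e : Sym2 W) : S.pathSet e ⊆ Y.verts := by
  rintro x ⟨u, v, h, -, hx⟩
  exact S.verts_eq ▸ Or.inr ⟨u, v, h, hx⟩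

theorem connected_induce_pathSet {e : Sym2 W} (he : e ∈ X.edgeSet) :
    (G.induce (S.pathSet e)).Connected := by
  induction e with | _ u v
  rw [S.pathSet_mk he]
  exact (S.path he).connected_induce_support

theorem branch_mem_pathSet_iff {e : Sym2 W} (he : e ∈ X.edgeSet) {w : W} :
    S.branch w ∈ S.pathSet e ↔ w ∈ e := by
  induction e with | _ u v
  rw [S.pathSet_mk he, Sym2.mem_iff]
  refine ⟨S.eq_or_eq_of_branch_mem he w, ?_⟩
  rintro (rfl | rfl)
  exacts [(S.path he).start_mem_support, (S.path he).end_mem_support]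

theorem exists_eq_branch_of_mem_pathSet {e e' : Sym2 W} (hne : e ≠ e') {x : V}
    (hx : x ∈ S.pathSet e) (hx' : x ∈ S.pathSet e') : ∃ w ∈ e, x = S.branch w := by
  obtain ⟨u, v, h, rfl, hx⟩ := hx
  obtain ⟨u', v', h', rfl, hx'⟩ := hx'
  rcases S.eq_branch_of_mem_of_mem h h' hne x hx hx' with rfl | rfl
  exacts [⟨u, Sym2.mem_mk_left u v, rfl⟩, ⟨v, Sym2.mem_mk_right u v, rfl⟩]

/-! ### Distances in a subdivision -/

theorem exists_branch_mem_support {e : Sym2 W} {x y : V} (q : Y.spanningCoe.Walk x y)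
    (hx : x ∈ S.pathSet e) (hy : y ∉ S.pathSet e) : ∃ w ∈ e, S.branch w ∈ q.support := by
  obtain ⟨d, hd, hfst, hsnd⟩ := q.exists_boundary_dart (S.pathSet e) hx hy
  obtain ⟨u, v, h, hadj⟩ := S.exists_path_adj d.adj
  have mem_pathSet {z : V} (hz : z ∈ (S.path h).toSubgraph.verts) : z ∈ S.pathSet s(u, v) :=
    ⟨u, v, h, rfl, (Walk.mem_verts_toSubgraph _).1 hz⟩
  have hne : e ≠ s(u, v) := fun he => hsnd (he ▸ mem_pathSet hadj.snd_mem)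
  obtain ⟨w, hw, hfst_eq⟩ :=
    S.exists_eq_branch_of_mem_pathSet hne hfst (mem_pathSet hadj.fst_mem)
  exact ⟨w, hw, hfst_eq ▸ q.dart_fst_mem_support_of_mem_darts hd⟩

theorem exists_edist_add_edist_le {e : Sym2 W} {x y : V} (hx : x ∈ S.pathSet e)
    (hy : y ∉ S.pathSet e) :
    ∃ w ∈ e, Y.spanningCoe.edist x (S.branch w) + Y.spanningCoe.edist (S.branch w) y ≤
      Y.spanningCoe.edist x y := by
  by_cases htop : Y.spanningCoe.edist x y = ⊤
  · exact ⟨_, e.out_fst_mem, htop ▸ le_top⟩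
  · obtain ⟨q, hq⟩ := exists_walk_of_edist_ne_top htop
    obtain ⟨w, hw, hwq⟩ := S.exists_branch_mem_support q hx hy
    exact ⟨w, hw, hq ▸ edist_add_edist_le_length hwq⟩

theorem exists_eq_snd_of_adj_branch {u : W} {b : V} (hub : Y.Adj (S.branch u) b) :
    ∃ (w : W) (h : X.Adj u w), b = (S.path h).snd := by
  obtain ⟨w, h, hadj⟩ :
      ∃ (w : W) (h : X.Adj u w), (S.path h).toSubgraph.Adj (S.branch u) b := by
    obtain ⟨u', v', h, hadj⟩ := S.exists_path_adj hub
    have hu : S.branch u ∈ (S.path h).support := (Walk.mem_verts_toSubgraph _).1 hadj.fst_mem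
    rcases S.eq_or_eq_of_branch_mem h u hu with rfl | rfl
    · exact ⟨v', h, hadj⟩
    · exact ⟨u', h.symm, S.toSubgraph_path_symm h ▸ hadj⟩
  have hnil : ¬ (S.path h).Nil := Walk.not_nil_iff_lt_length.2 (Nat.zero_lt_of_lt (S.lt_length h))
  have hmem : b ∈ (S.path h).toSubgraph.neighborSet (S.branch u) := hadj
  rw [(S.isPath h).neighborSet_toSubgraph_startpoint hnil] at hmem
  exact ⟨w, h, hmem⟩

theorem eq_getVert_of_adj_getVert {u v : W} (h : X.Adj u v) {i : ℕ} (hi : i ≠ 0)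
    (hi' : i < (S.path h).length) {b : V} (hb : Y.Adj ((S.path h).getVert i) b) :
    b = (S.path h).getVert (i - 1) ∨ b = (S.path h).getVert (i + 1) := by
  obtain ⟨u', v', h', hadj⟩ := S.exists_path_adj hb
  have hs : s(u, v) = s(u', v') := by
    by_contra hs
    rcases S.eq_branch_of_mem_of_mem h h' hs _ ((S.path h).getVert_mem_support i)
      ((Walk.mem_verts_toSubgraph _).1 hadj.fst_mem) with hu | hv
    · exact hi (((S.isPath h).getVert_eq_start_iff hi'.le).1 hu)
    · exact hi'.ne (((S.isPath h).getVert_eq_end_iff hi'.le).1 hv)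
  have hmem : b ∈ (S.path h).toSubgraph.neighborSet ((S.path h).getVert i) := by
    rwa [S.toSubgraph_path_eq h h' hs]
  rwa [(S.isPath h).neighborSet_toSubgraph_internal hi hi'] at hmem

-- Following the walk, the position `i` on the current branch path at `u` changes by at most one
-- per step, except that it is reset when the walk returns to the branch vertex of `u`.
theorem lt_length_add_of_getVert_eq {u v : W} (hvu : v ≠ u) {x y : V}
    (q : Y.spanningCoe.Walk x y) (hy : y = S.branch v) {w : W} (h : X.Adj u w) {i : ℕ}
    (hi : i ≤ (S.path h).length) (hx : x = (S.path h).getVert i) : k < q.length + i := by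
  induction q generalizing w i with
  | @nil x =>
    have hxv : (S.path h).getVert i = S.branch v := hx.symm.trans hy
    obtain rfl : v = w := (S.eq_or_eq_of_branch_mem h v
      (hxv ▸ (S.path h).getVert_mem_support i)).resolve_left hvu
    rw [((S.isPath h).getVert_eq_end_iff hi).1 hxv]
    exact (S.lt_length h).trans_le (Nat.le_add_left _ _)
  | @cons x b y hxb q ih =>
    rw [Walk.length_cons]
    rcases hi.eq_or_lt with rfl | hi
    · exact (S.lt_length h).trans_le (Nat.le_add_left _ _)
    rcases eq_or_ne i 0 with rfl | hi0
    · rw [hx, Walk.getVert_zero] at hxb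
      obtain ⟨w', h', hb⟩ := S.exists_eq_snd_of_adj_branch hxb
      exact ih hy h' (Nat.one_le_of_lt (S.lt_length h')) hb
    · rw [hx] at hxb
      rcases S.eq_getVert_of_adj_getVert h hi0 hi hxb with hb | hb
      · have := ih hy h ((Nat.sub_le i 1).trans hi.le) hb
        lia
      · have := ih hy h hi hb
        lia

theorem lt_edist_branch {u v : W} (huv : u ≠ v) :
    (k : ℕ∞) < Y.spanningCoe.edist (S.branch u) (S.branch v) := by
  by_contra! hle
  obtain ⟨q, hq⟩ := exists_walk_length_le_of_edist_le hle
  have hnil : ¬ q.Nil := fun h => huv (S.branch_injective h.eq)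
  obtain ⟨w, h, -⟩ := S.exists_eq_snd_of_adj_branch (q.adj_snd hnil)
  have := S.lt_length_add_of_getVert_eq huv.symm q rfl h (Nat.zero_le _)
    (Walk.getVert_zero _).symm
  lia

/-! ### The minor model in the decomposition graph -/

/-- The ball of radius `E` around the branch vertex of `w`, with distances measured in the
subdivision `Y`. -/
def branchBall (E : ℕ) (w : W) : Set V := ballSet Y.spanningCoe {S.branch w} E

theorem mem_branchBall {E : ℕ} {w : W} {x : V} :
    x ∈ S.branchBall E w ↔ Y.spanningCoe.edist (S.branch w) x ≤ E :=
  mem_ballSet_singleton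

theorem branchBall_subset_verts (E : ℕ) (w : W) : S.branchBall E w ⊆ Y.verts :=
  ballSet_spanningCoe_subset_verts (S.branch_mem_verts w) E

theorem connected_induce_branchBall (E : ℕ) (w : W) : (G.induce (S.branchBall E w)).Connected :=
  (connected_induce_ballSet_singleton Y.spanningCoe (S.branch w) E).mono
    (comap_monotone _ Y.spanningCoe_le)

variable {B : N → Set V} {E : ℕ}

theorem disjoint_nodesMeeting_branchBall (hB : TraceDiamLE Y B E) (hE : 3 * E ≤ k) {u v : W}
    (huv : u ≠ v) :
    Disjoint (nodesMeeting B (S.branchBall E u)) (nodesMeeting B (S.branchBall E v)) := by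
  rw [Set.disjoint_left]
  rintro h ⟨x, hxB, hx⟩ ⟨y, hyB, hy⟩
  have hxy := hB (S.branchBall_subset_verts E u hx) (S.branchBall_subset_verts E v hy) hxB hyB
  rw [mem_branchBall] at hx hy
  refine (S.lt_edist_branch huv).not_ge ?_
  calc Y.spanningCoe.edist (S.branch u) (S.branch v)
      ≤ Y.spanningCoe.edist (S.branch u) x + Y.spanningCoe.edist x (S.branch v) :=
        SimpleGraph.edist_triangle
    _ ≤ Y.spanningCoe.edist (S.branch u) x +
          (Y.spanningCoe.edist x y + Y.spanningCoe.edist y (S.branch v)) := by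
        gcongr; exact SimpleGraph.edist_triangle
    _ ≤ E + (E + E) := by rw [edist_comm (v := S.branch v)]; gcongr
    _ ≤ k := by norm_cast; lia

theorem disjoint_nodesMeeting_pathSet_branchBall (hB : TraceDiamLE Y B E) (hE : 2 * E ≤ k)
    {e : Sym2 W} (he : e ∈ X.edgeSet) {w : W} (hw : w ∉ e) :
    Disjoint (nodesMeeting B (S.pathSet e)) (nodesMeeting B (S.branchBall E w)) := by
  rw [Set.disjoint_left]
  rintro h ⟨x, hxB, hx⟩ ⟨y, hyB, hy⟩
  have hxy := hB (S.pathSet_subset_verts e hx) (S.branchBall_subset_verts E w hy) hxB hyB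
  rw [mem_branchBall] at hy
  obtain ⟨u, hu, hxuw⟩ :=
    S.exists_edist_add_edist_le hx (mt (S.branch_mem_pathSet_iff he).1 hw)
  have huw : u ≠ w := by rintro rfl; exact hw hu
  refine (S.lt_edist_branch huw).not_ge ?_
  calc Y.spanningCoe.edist (S.branch u) (S.branch w)
      ≤ Y.spanningCoe.edist x (S.branch w) := le_add_self.trans hxuw
    _ ≤ Y.spanningCoe.edist x y + Y.spanningCoe.edist y (S.branch w) :=
        SimpleGraph.edist_triangle
    _ ≤ E + E := by rw [edist_comm (v := S.branch w)]; gcongr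
    _ ≤ k := by norm_cast; lia

theorem nodesMeeting_pathSet_inter_subset (hB : TraceDiamLE Y B E) {e e' : Sym2 W}
    (hne : e ≠ e') :
    nodesMeeting B (S.pathSet e) ∩ nodesMeeting B (S.pathSet e') ⊆
      ⋃ w, nodesMeeting B (S.branchBall E w) := by
  rintro h ⟨⟨x, hxB, hx⟩, ⟨y, hyB, hy⟩⟩
  have hxy := hB (S.pathSet_subset_verts e hx) (S.pathSet_subset_verts e' hy) hxB hyB
  obtain ⟨w, hxw⟩ : ∃ w, Y.spanningCoe.edist x (S.branch w) ≤ Y.spanningCoe.edist x y := by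
    by_cases hye : y ∈ S.pathSet e
    · obtain ⟨w, -, rfl⟩ := S.exists_eq_branch_of_mem_pathSet hne hye hy
      exact ⟨w, le_rfl⟩
    · obtain ⟨w, -, hw⟩ := S.exists_edist_add_edist_le hx hye
      exact ⟨w, le_self_add.trans hw⟩
  exact Set.mem_iUnion.2
    ⟨w, x, hxB, S.mem_branchBall.2 (edist_comm.trans_le (hxw.trans hxy))⟩

theorem isMinorOf (S : Subdivision k X Y) {H : SimpleGraph N} (hD : IsGraphDecomp G H B)
    (hB : TraceDiamLE Y B E) (hE : 3 * E ≤ k) : IsMinorOf X H := by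
  refine isMinorOf_of_connected_sets (T := fun w => nodesMeeting B (S.branchBall E w))
    (C := fun e => nodesMeeting B (S.pathSet e)) ?_ ?_ ?_ ?_ ?_ ?_
  · exact fun w => hD.connected_induce_nodesMeeting (S.connected_induce_branchBall E w)
  · exact fun u v huv => S.disjoint_nodesMeeting_branchBall hB hE huv
  · exact fun e he => hD.connected_induce_nodesMeeting (S.connected_induce_pathSet he)
  · exact fun e he w hw => hD.nodesMeeting_inter_nonempty ((S.branch_mem_pathSet_iff he).2 hw)
      (center_mem_ballSet _ _ E)
  · exact fun e he w hw => S.disjoint_nodesMeeting_pathSet_branchBall hB (by lia) he hw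
  · exact fun e _ e' _ hne => S.nodesMeeting_pathSet_inter_subset hB hne

end Subdivision

theorem isMinorOf_of_containsQuasiGeodesicSubdivGE {X : SimpleGraph W} {G : SimpleGraph V}
    {H : SimpleGraph N} {B : N → Set V} {c k r : ℕ}
    (hcontain : ContainsQuasiGeodesicSubdivGE G (c * k) X c) (hD : IsGraphDecomp G H B)
    (hB : ∀ h, radiusLE (G.induce (B h)) r) (hr : 6 * r ≤ k) : IsMinorOf X H := by
  obtain ⟨Y, hsub, hY⟩ := hcontain
  obtain ⟨S⟩ := hsub.nonempty_subdivision
  refine S.isMinorOf hD (hY.traceDiamLE hB) ?_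
  calc 3 * (c * (2 * r)) = c * (6 * r) := by ring
    _ ≤ c * k := Nat.mul_le_mul_left c hr

theorem radial_width_lower_bound_of_quasi_geodesic_subdivision_general
    {V : Type*} (ℋ : ∀ n : ℕ, SimpleGraph (Fin n) → Prop)
    (hmc : MinorClosed ℋ) (c k : ℕ) {m : ℕ} (X : SimpleGraph (Fin m)) (hX : ¬ ℋ m X)
    (G : SimpleGraph V) (hcontain : ContainsQuasiGeodesicSubdivGE G (c * k) X c) :
    ∀ (n : ℕ) (Hg : SimpleGraph (Fin n)) (B : Fin n → Set V), ℋ n Hg →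
      IsGraphDecomp G Hg B → ∀ r : ℕ, (∀ h, radiusLE (G.induce (B h)) r) →
      (k : ℚ) / 6 < r := by
  intro n Hg B hHg hD r hB
  have hkr : k < 6 * r := by
    by_contra! hr
    exact hX (hmc X Hg hHg (isMinorOf_of_containsQuasiGeodesicSubdivGE hcontain hD hB hr))
  rw [div_lt_iff₀' (by norm_num)]
  exact_mod_cast hkr

/-- Let `ℋ` be a minor-closed class of graphs, `c k : ℕ`, and `X ∉ ℋ`.
If a graph `G` contains a `(≥ c·k)`-subdivision of `X` as a `c`-quasi-geodesic subgraph,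
then the radial `ℋ`-width of `G` is at least `k / 12`. -/
theorem radial_width_lower_bound_of_quasi_geodesic_subdivision
    {V : Type*} [Fintype V] (ℋ : ∀ n : ℕ, SimpleGraph (Fin n) → Prop)
    (hmc : MinorClosed ℋ) (c k : ℕ) {m : ℕ} (X : SimpleGraph (Fin m)) (hX : ¬ ℋ m X)
    (G : SimpleGraph V) (hcontain : ContainsQuasiGeodesicSubdivGE G (c * k) X c) :
    ∀ (n : ℕ) (Hg : SimpleGraph (Fin n)) (B : Fin n → Set V), ℋ n Hg →
      IsGraphDecomp G Hg B → ∀ r : ℕ, (∀ h, radiusLE (G.induce (B h)) r) →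
      (k : ℚ) / 12 ≤ (r : ℚ) := by
  intro n Hg B hHg hD r hB
  have := radial_width_lower_bound_of_quasi_geodesic_subdivision_general ℋ hmc c k X hX G hcontain
    n Hg B hHg hD r hB
  linarith [k.cast_nonneg (α := ℚ)]

end RadialPaper
end

section
/- Let k ∈ ℕ. If a connected graph G contains no (≥k)-subdivision of the triangle K³ as a geodesic subgraph and no (≥3k)-subdivision of the claw K_{1,3} as a 3-quasi-geodesic subgraph, then there exists a path P and a P-decomposition of G of radial width at most 18k + 2. -/
open SimpleGraph

namespace RadialPaper

variable {V W N : Type*}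

/-!
Let `p` be a longest geodesic. If it has length at most `18k + 2`, a single bag is enough.
Otherwise project every vertex to a nearest vertex of `p`, its foot. A geodesic to `p` from a vertex
at distance more than `3k` whose foot is further than `3k` from both ends of `p` would complete `p`
to a `3`-quasi-geodesic claw; so vertices at distance more than `3k` from `p` have their feet close
to one of the two ends.

Adjacent such vertices belong to the same end. If not, the edge between them closes up through `p`
to a closed walk for which the signed number of crossings between the two ends, outside the
`3k`-neighbourhood of `p`, is nonzero. This number is the total weight of a voltage assignment,
hence additive, so a shortest closed walk on which it is nonzero is a geodesic cycle. That cycle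
meets the neighbourhood and has a crossing edge at distance more than `6k` from `p`, so it is long
enough to be a geodesic subdivided triangle.

Now a geodesic from a vertex far from `p` to the opposite end of `p` enters the `3k`-neighbourhood
near its own end, and since it is no longer than `p`, its first vertex is at distance at most `9k`
from `p`. The preimages under the projection of the subpaths of `p` of length `18k + 1` are then the
bags of the required decomposition.
-/

section Walks

variable {G : SimpleGraph V} {u v x y : V}

/-- The segment of the walk `p` from its `i`-th to its `j`-th vertex. -/
def subwalk (p : G.Walk u v) {i j : ℕ} (hij : i ≤ j) : G.Walk (p.getVert i) (p.getVert j) :=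
  ((p.drop i).take (j - i)).copy rfl (by rw [Walk.drop_getVert, Nat.add_sub_cancel' hij])

theorem take_append_subwalk (p : G.Walk u v) {i j : ℕ} (hij : i ≤ j) :
    (p.take i).append (subwalk p hij) = p.take j := by
  refine Walk.ext_getVert fun m => ?_
  simp only [subwalk, Walk.getVert_append, Walk.getVert_copy, Walk.take_getVert,
    Walk.drop_getVert, Walk.take_length]
  split_ifs with h
  · congr 1; lia
  · rcases le_total i p.length with hi | hi
    · congr 1; lia
    · rw [p.getVert_of_length_le (by lia), p.getVert_of_length_le (by lia)]

theorem take_append_subwalk_append_drop (p : G.Walk u v) {i j : ℕ} (hij : i ≤ j) :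
    ((p.take i).append (subwalk p hij)).append (p.drop j) = p := by
  rw [take_append_subwalk, Walk.append_take_drop_eq]

theorem subwalk_isSubwalk (p : G.Walk u v) {i j : ℕ} (hij : i ≤ j) :
    (subwalk p hij).IsSubwalk p :=
  ⟨_, _, (take_append_subwalk_append_drop p hij).symm⟩

theorem length_subwalk (p : G.Walk u v) {i j : ℕ} (hij : i ≤ j) (hj : j ≤ p.length) :
    (subwalk p hij).length = j - i := by
  simp only [subwalk, Walk.length_copy, Walk.take_length, Walk.drop_length]
  lia

theorem getVert_subwalk (p : G.Walk u v) {i j m : ℕ} (hij : i ≤ j) (hm : i + m ≤ j) :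
    (subwalk p hij).getVert m = p.getVert (i + m) := by
  simp only [subwalk, Walk.getVert_copy, Walk.take_getVert, Walk.drop_getVert]
  congr 1
  lia

theorem mem_support_take_iff (p : G.Walk u v) {n : ℕ} (hn : n ≤ p.length) :
    x ∈ (p.take n).support ↔ ∃ m ≤ n, p.getVert m = x := by
  rw [Walk.mem_support_iff_exists_getVert, Walk.take_length, min_eq_left hn]
  simp only [Walk.take_getVert]
  grind

theorem mem_support_drop_iff (p : G.Walk u v) {n : ℕ} (hn : n ≤ p.length) :
    x ∈ (p.drop n).support ↔ ∃ m, n ≤ m ∧ m ≤ p.length ∧ p.getVert m = x := by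
  rw [Walk.mem_support_iff_exists_getVert, Walk.drop_length]
  simp only [Walk.drop_getVert]
  refine ⟨fun ⟨m, hm, _⟩ => ⟨n + m, by lia, by lia, hm⟩, fun ⟨m, _, _, hm⟩ => ⟨m - n, ?_, by lia⟩⟩
  rwa [Nat.add_sub_cancel' ‹n ≤ m›]

theorem mem_support_subwalk_iff (p : G.Walk u v) {i j : ℕ} (hij : i ≤ j) (hj : j ≤ p.length) :
    x ∈ (subwalk p hij).support ↔ ∃ m, i ≤ m ∧ m ≤ j ∧ p.getVert m = x := by
  rw [Walk.mem_support_iff_exists_getVert, length_subwalk p hij hj]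
  refine ⟨fun ⟨m, hm, _⟩ => ⟨i + m, by lia, by lia, by rwa [← getVert_subwalk p hij (by lia)]⟩,
    fun ⟨m, _, _, hm⟩ => ⟨m - i, ?_, by lia⟩⟩
  rwa [getVert_subwalk p hij (by lia), Nat.add_sub_cancel' ‹i ≤ m›]

theorem toSubgraph_le_of_isSubwalk {p : G.Walk u v} {q : G.Walk x y} (h : q.IsSubwalk p) :
    q.toSubgraph ≤ p.toSubgraph := by
  obtain ⟨r, s, rfl⟩ := h
  simp only [Walk.toSubgraph_append]
  exact le_sup_right.trans le_sup_left

end Walks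

section Geodesics

variable {G : SimpleGraph V} {u v x y : V} {p : G.Walk u v}

theorem dist_getVert_getVert (hp : p.length = G.dist u v) {i j : ℕ} (hi : i ≤ p.length)
    (hj : j ≤ p.length) : G.dist (p.getVert i) (p.getVert j) = i - j + (j - i) := by
  have hle : ∀ {i j}, (hij : i ≤ j) → j ≤ p.length →
      G.dist (p.getVert i) (p.getVert j) = j - i := fun hij hj => by
    rw [← length_eq_dist_of_subwalk hp (subwalk_isSubwalk p hij), length_subwalk p hij hj]
  rcases le_total i j with h | h
  · rw [hle h hj, Nat.sub_eq_zero_of_le h, zero_add]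
  · rw [dist_comm, hle h hi, Nat.sub_eq_zero_of_le h, add_zero]

theorem exists_geodesic_le_toSubgraph (hp : p.length = G.dist u v) (hx : x ∈ p.support)
    (hy : y ∈ p.support) :
    ∃ q : G.Walk x y, q.toSubgraph ≤ p.toSubgraph ∧ q.length = G.dist x y := by
  obtain ⟨i, rfl, -⟩ := Walk.mem_support_iff_exists_getVert.1 hx
  obtain ⟨j, rfl, -⟩ := Walk.mem_support_iff_exists_getVert.1 hy
  rcases le_total i j with h | h
  · exact ⟨_, toSubgraph_le_of_isSubwalk (subwalk_isSubwalk p h),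
      length_eq_dist_of_subwalk hp (subwalk_isSubwalk p h)⟩
  · refine ⟨(subwalk p h).reverse, ?_, ?_⟩
    · rw [Walk.toSubgraph_reverse]
      exact toSubgraph_le_of_isSubwalk (subwalk_isSubwalk p h)
    · rw [Walk.length_reverse, dist_comm,
        length_eq_dist_of_subwalk hp (subwalk_isSubwalk p h)]

theorem dist_add_dist_of_mem_support (hp : p.length = G.dist u v) (hx : x ∈ p.support) :
    G.dist u x + G.dist x v = G.dist u v := by
  classical
  rw [← length_eq_dist_of_subwalk hp (p.isSubwalk_takeUntil hx),
    ← length_eq_dist_of_subwalk hp (p.isSubwalk_dropUntil hx), ← Walk.length_append,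
    Walk.take_spec, hp]

theorem isQuasiGeodesic_of_exists_walk {Y : G.Subgraph} {c : ℕ}
    (h : ∀ x ∈ Y.verts, ∀ y ∈ Y.verts,
      ∃ w : G.Walk x y, w.toSubgraph ≤ Y ∧ w.length ≤ c * G.dist x y) :
    IsQuasiGeodesic G Y c := by
  rintro ⟨x, hx⟩ ⟨y, hy⟩
  obtain ⟨w, hwY, hwlen⟩ := h x hx y hy
  let w' : Y.coe.Walk ⟨x, hx⟩ ⟨y, hy⟩ := w.mapToSubgraph.map (Subgraph.inclusion hwY)
  have hw' : w'.length = w.length :=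
    (Walk.length_map _ _).trans <| (Walk.length_map w.toSubgraph.hom _).symm.trans <|
      congrArg Walk.length w.map_mapToSubgraph_hom
  calc Y.coe.edist ⟨x, hx⟩ ⟨y, hy⟩ ≤ w'.length := edist_le w'
    _ ≤ ((c * G.dist x y : ℕ) : ℕ∞) := by rw [hw']; exact_mod_cast hwlen
    _ = c * G.edist x y := by rw [Nat.cast_mul, w.reachable.coe_dist_eq_edist]

theorem radiusLE_induce_of_exists_walk {S : Set V} {c : V} {r : ℕ} (hc : c ∈ S)
    (h : ∀ v ∈ S, ∃ w : G.Walk c v, (∀ x ∈ w.support, x ∈ S) ∧ w.length ≤ r) :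
    radiusLE (G.induce S) r := by
  refine fun _ => ⟨⟨c, hc⟩, fun ⟨v, hv⟩ => ?_⟩
  obtain ⟨w, hwS, hwlen⟩ := h v hv
  have hlen : (w.induce S hwS).length = w.length :=
    (Walk.length_map (Embedding.induce S).toHom _).symm.trans <|
      congrArg Walk.length (w.map_induce hwS)
  exact (edist_le (w.induce S hwS)).trans (by rw [hlen]; exact_mod_cast hwlen)

end Geodesics

section Subdivisions

variable {G : SimpleGraph V} {X : SimpleGraph W} {k : ℕ} {src tgt : N → W} {f : W → V}

-- `IsSubdivGE` asks for a walk along every ordered pair of adjacent vertices, compatibly with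
-- reversal; orienting each edge from `src` to `tgt` makes one walk per edge enough.
theorem exists_symm_walks_extending (hX : ∀ u v, X.Adj u v ↔ ∃ e, s(src e, tgt e) = s(u, v))
    (hinj : Function.Injective fun e => s(src e, tgt e))
    (arc : ∀ e, G.Walk (f (src e)) (f (tgt e))) :
    ∃ P : ∀ ⦃u v⦄, X.Adj u v → G.Walk (f u) (f v),
      (∀ e (h : X.Adj (src e) (tgt e)), P h = arc e) ∧
      ∀ e (h : X.Adj (tgt e) (src e)), P h = (arc e).reverse := by
  have hwalk : ∀ ⦃u v⦄, X.Adj u v → ∃ w : G.Walk (f u) (f v),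
      (∀ e (hs : src e = u) (ht : tgt e = v),
        w = (arc e).copy (congrArg f hs) (congrArg f ht)) ∧
      ∀ e (ht : tgt e = u) (hs : src e = v),
        w = (arc e).reverse.copy (congrArg f ht) (congrArg f hs) := by
    intro u v h
    obtain ⟨e, he⟩ := (hX u v).1 h
    have hunique : ∀ e', s(src e', tgt e') = s(u, v) → e' = e := fun e' he' =>
      hinj (he'.trans he.symm)
    rcases Sym2.eq_iff.1 he with ⟨rfl, rfl⟩ | ⟨rfl, rfl⟩
    · refine ⟨arc e, fun e' hs ht => ?_, fun e' ht hs => ?_⟩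
      · obtain rfl := hunique e' (by rw [hs, ht])
        rfl
      · obtain rfl := hunique e' (by rw [hs, ht, Sym2.eq_swap])
        exact (h.ne hs).elim
    · refine ⟨(arc e).reverse, fun e' hs ht => ?_, fun e' ht hs => ?_⟩
      · obtain rfl := hunique e' (by rw [hs, ht])
        exact (h.ne ht).elim
      · obtain rfl := hunique e' (by rw [hs, ht, Sym2.eq_swap])
        rfl
  choose P hP hP' using hwalk
  exact ⟨P, fun e h => hP h e rfl rfl, fun e h => hP' h e rfl rfl⟩

theorem iSup_toSubgraph_eq_of_symm_walks
    (hX : ∀ u v, X.Adj u v ↔ ∃ e, s(src e, tgt e) = s(u, v))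
    {arc : ∀ e, G.Walk (f (src e)) (f (tgt e))} {P : ∀ ⦃u v⦄, X.Adj u v → G.Walk (f u) (f v)}
    (hP : ∀ e (h : X.Adj (src e) (tgt e)), P h = arc e)
    (hP' : ∀ e (h : X.Adj (tgt e) (src e)), P h = (arc e).reverse) :
    ⨆ e, (arc e).toSubgraph = ⨆ (u) (v) (h : X.Adj u v), (P h).toSubgraph := by
  refine le_antisymm (iSup_le fun e => ?_) (iSup_le fun u => iSup₂_le fun v h => ?_)
  · rw [← hP e ((hX _ _).2 ⟨e, rfl⟩)]
    exact le_iSup_of_le _ (le_iSup₂_of_le _ _ le_rfl)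
  · obtain ⟨e, he⟩ := (hX u v).1 h
    rcases Sym2.eq_iff.1 he with ⟨rfl, rfl⟩ | ⟨rfl, rfl⟩
    · exact le_iSup_of_le e (by rw [hP])
    · exact le_iSup_of_le e (by rw [hP', Walk.toSubgraph_reverse])

theorem isSubdivGE_iSup_toSubgraph (hX : ∀ u v, X.Adj u v ↔ ∃ e, s(src e, tgt e) = s(u, v))
    (hinj : Function.Injective fun e => s(src e, tgt e)) (hf : Function.Injective f)
    (hcover : ∀ w, ∃ e, w = src e ∨ w = tgt e) {arc : ∀ e, G.Walk (f (src e)) (f (tgt e))}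
    (hpath : ∀ e, (arc e).IsPath) (hlen : ∀ e, k + 1 ≤ (arc e).length)
    (hbranch : ∀ e w, f w ∈ (arc e).support → w = src e ∨ w = tgt e)
    (hmeet : ∀ e e', e ≠ e' → ∀ x ∈ (arc e).support, x ∈ (arc e').support → x ∈ Set.range f) :
    IsSubdivGE k X (⨆ e, (arc e).toSubgraph) := by
  obtain ⟨P, hP, hP'⟩ := exists_symm_walks_extending hX hinj arc
  have hadj : ∀ e, X.Adj (src e) (tgt e) := fun e => (hX _ _).2 ⟨e, rfl⟩
  have hedge : ∀ {u v}, X.Adj u v → ∃ e, (src e = u ∧ tgt e = v) ∨ (src e = v ∧ tgt e = u) :=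
    fun h => ((hX _ _).1 h).imp fun _ he => Sym2.eq_iff.1 he
  have hends : ∀ e e', e ≠ e' → ∀ x ∈ (arc e).support, x ∈ (arc e').support →
      (x = f (src e) ∨ x = f (tgt e)) ∧ (x = f (src e') ∨ x = f (tgt e')) := by
    intro e e' hne x hx hx'
    obtain ⟨w, rfl⟩ := hmeet e e' hne x hx hx'
    simp only [hf.eq_iff]
    exact ⟨hbranch e w hx, hbranch e' w hx'⟩
  have hsup := iSup_toSubgraph_eq_of_symm_walks hX hP hP'
  have hrange : Set.range f ⊆ {x | ∃ (u v : W) (h : X.Adj u v), x ∈ (P h).support} := by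
    rintro - ⟨w, rfl⟩
    obtain ⟨e, rfl | rfl⟩ := hcover w
    exacts [⟨_, _, hadj e, Walk.start_mem_support _⟩, ⟨_, _, hadj e, Walk.end_mem_support _⟩]
  refine ⟨f, P, hf, fun u v h => ?_, fun u v h => ?_, fun u v h => ?_,
    fun u v h w hw => ?_, fun u v u' v' h h' hne x hx hx' => ?_, ?_, ?_⟩
  · obtain ⟨e, ⟨rfl, rfl⟩ | ⟨rfl, rfl⟩⟩ := hedge h <;> simp [hP, hP', hpath]
  · obtain ⟨e, ⟨rfl, rfl⟩ | ⟨rfl, rfl⟩⟩ := hedge h <;> simpa [hP, hP'] using hlen e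
  · obtain ⟨e, ⟨rfl, rfl⟩ | ⟨rfl, rfl⟩⟩ := hedge h <;> simp [hP, hP']
  · obtain ⟨e, ⟨rfl, rfl⟩ | ⟨rfl, rfl⟩⟩ := hedge h
    · exact hbranch e w (by simpa [hP] using hw)
    · exact (hbranch e w (by simpa [hP'] using hw)).symm
  · obtain ⟨e, ⟨rfl, rfl⟩ | ⟨rfl, rfl⟩⟩ := hedge h <;>
      obtain ⟨e', ⟨rfl, rfl⟩ | ⟨rfl, rfl⟩⟩ := hedge h' <;>
      simp only [hP, hP', Walk.support_reverse, List.mem_reverse] at hx hx' <;>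
      simpa only [or_comm] using hends e e' (by rintro rfl; simp [Sym2.eq_swap] at hne) x hx hx'
  · rw [hsup, Set.union_eq_right.2 hrange]
    ext x
    simp
  · rw [hsup]
    ext d
    simp

theorem end_ne_start_of_isPath {u v : V} {p : G.Walk u v} (hp : p.IsPath)
    (hlen : k + 1 ≤ p.length) : v ≠ u := by
  rintro rfl
  have := (Walk.isPath_iff_nil.1 hp).length_eq_zero
  lia

theorem isSubdivGE_triangleGraph_iSup {f : Fin 3 → V} {arc : ∀ i, G.Walk (f i) (f (i + 1))}
    (hpath : ∀ i, (arc i).IsPath) (hlen : ∀ i, k + 1 ≤ (arc i).length)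
    (hmeet : ∀ i, ∀ x ∈ (arc i).support, x ∈ (arc (i + 1)).support → x = f (i + 1)) :
    IsSubdivGE k triangleGraph (⨆ i, (arc i).toSubgraph) := by
  have hstep : ∀ i, f (i + 1) ≠ f i := fun i => end_ne_start_of_isPath (hpath i) (hlen i)
  have hcyc : ∀ i j : Fin 3, i = j ∨ j = i + 1 ∨ i = j + 1 := by decide
  have hthird : ∀ i j : Fin 3, j = i ∨ j = i + 1 ∨ j = i + 1 + 1 := by decide
  refine isSubdivGE_iSup_toSubgraph (src := id) (tgt := (· + 1))
    (by simp only [triangleGraph, top_adj]; decide) (by decide) (fun i j hij => ?_)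
    (fun w => ⟨w, Or.inl rfl⟩) hpath hlen (fun i w hw => ?_) fun i j hij x hx hx' => ?_
  · rcases hcyc i j with rfl | rfl | rfl
    exacts [rfl, (hstep i hij.symm).elim, (hstep j hij).elim]
  · rcases hthird i w with rfl | rfl | rfl
    · exact Or.inl rfl
    · exact Or.inr rfl
    · exact (hstep _ (hmeet i _ hw (Walk.end_mem_support _))).elim
  · rcases hcyc i j with rfl | rfl | rfl
    exacts [(hij rfl).elim, ⟨_, (hmeet i x hx hx').symm⟩, ⟨_, (hmeet j x hx' hx).symm⟩]

theorem isSubdivGE_triangleGraph {x y z : V} {p : G.Walk x y} {q : G.Walk y z} {r : G.Walk z x}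
    (hp : p.IsPath) (hq : q.IsPath) (hr : r.IsPath) (hpk : k + 1 ≤ p.length)
    (hqk : k + 1 ≤ q.length) (hrk : k + 1 ≤ r.length)
    (hpq : ∀ w ∈ p.support, w ∈ q.support → w = y) (hqr : ∀ w ∈ q.support, w ∈ r.support → w = z)
    (hrp : ∀ w ∈ r.support, w ∈ p.support → w = x) :
    IsSubdivGE k triangleGraph (p.toSubgraph ⊔ q.toSubgraph ⊔ r.toSubgraph) := by
  let arc : ∀ i : Fin 3, G.Walk (![x, y, z] i) (![x, y, z] (i + 1))
    | 0 => p
    | 1 => q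
    | 2 => r
  have harc : IsSubdivGE k triangleGraph (⨆ i, (arc i).toSubgraph) :=
    isSubdivGE_triangleGraph_iSup (by intro i; fin_cases i; exacts [hp, hq, hr])
      (by intro i; fin_cases i; exacts [hpk, hqk, hrk])
      (by intro i; fin_cases i; exacts [hpq, hqr, hrp])
  rwa [iSup_fin_three] at harc

theorem isSubdivGE_clawGraph_iSup {f : Fin 4 → V} {leg : ∀ i : Fin 3, G.Walk (f 0) (f i.succ)}
    (hpath : ∀ i, (leg i).IsPath) (hlen : ∀ i, k + 1 ≤ (leg i).length)
    (hmeet : ∀ i j, i ≠ j → ∀ x ∈ (leg i).support, x ∈ (leg j).support → x = f 0) :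
    IsSubdivGE k clawGraph (⨆ i, (leg i).toSubgraph) := by
  have hleaf : ∀ i : Fin 3, f i.succ ≠ f 0 := fun i =>
    end_ne_start_of_isPath (hpath i) (hlen i)
  have hend : ∀ i j : Fin 3, f j.succ ∈ (leg i).support → j = i := fun i j h =>
    not_not.1 fun hji => hleaf j (hmeet j i hji _ (Walk.end_mem_support _) h)
  refine isSubdivGE_iSup_toSubgraph (src := fun _ => 0) (tgt := Fin.succ)
    (by simp only [clawGraph, fromRel_adj]; decide) (by decide) ?_ ?_ hpath hlen
    (fun i w hw => ?_) fun i j hij x hx hx' => ⟨0, (hmeet i j hij x hx hx').symm⟩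
  · intro w w' hw
    cases w using Fin.cases with
    | zero => cases w' using Fin.cases with
      | zero => rfl
      | succ j => exact (hleaf j hw.symm).elim
    | succ i => cases w' using Fin.cases with
      | zero => exact (hleaf i hw).elim
      | succ j => exact congrArg Fin.succ (hend j i (by rw [hw]; exact Walk.end_mem_support _))
  · intro w
    cases w using Fin.cases
    exacts [⟨0, Or.inl rfl⟩, ⟨_, Or.inr rfl⟩]
  · cases w using Fin.cases
    exacts [Or.inl rfl, Or.inr (congrArg Fin.succ (hend i _ hw))]

theorem isSubdivGE_clawGraph {o x y z : V} {p : G.Walk o x} {q : G.Walk o y} {r : G.Walk o z}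
    (hp : p.IsPath) (hq : q.IsPath) (hr : r.IsPath) (hpk : k + 1 ≤ p.length)
    (hqk : k + 1 ≤ q.length) (hrk : k + 1 ≤ r.length)
    (hpq : ∀ w ∈ p.support, w ∈ q.support → w = o) (hqr : ∀ w ∈ q.support, w ∈ r.support → w = o)
    (hrp : ∀ w ∈ r.support, w ∈ p.support → w = o) :
    IsSubdivGE k clawGraph (p.toSubgraph ⊔ q.toSubgraph ⊔ r.toSubgraph) := by
  let leg : ∀ i : Fin 3, G.Walk (![o, x, y, z] 0) (![o, x, y, z] i.succ)
    | 0 => p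
    | 1 => q
    | 2 => r
  have hmeet : ∀ i, ∀ w ∈ (leg i).support, w ∈ (leg (i + 1)).support → w = o := by
    intro i
    fin_cases i
    exacts [hpq, hqr, hrp]
  have hleg : IsSubdivGE k clawGraph (⨆ i, (leg i).toSubgraph) := by
    refine isSubdivGE_clawGraph_iSup (by intro i; fin_cases i; exacts [hp, hq, hr])
      (by intro i; fin_cases i; exacts [hpk, hqk, hrk]) fun i j hij w hw hw' => ?_
    have hcyc : ∀ i j : Fin 3, i ≠ j → j = i + 1 ∨ i = j + 1 := by decide
    rcases hcyc i j hij with rfl | rfl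
    exacts [hmeet i w hw hw', hmeet j w hw' hw]
  rwa [iSup_fin_three] at hleg

end Subdivisions

section Cycles

variable {G : SimpleGraph V} {u x y : V} {c : G.Walk u u} {k : ℕ}

/-- A closed walk, read as a cycle, is geodesic if the distance in `G` of any two of its vertices
is the length of the shorter of the two arcs between them. Closed walks of length at most `2`, which
are not cycles, are not excluded. -/
def IsGeodesicCycle (c : G.Walk u u) : Prop :=
  ∀ ⦃i j⦄, i ≤ j → j ≤ c.length →
    min (j - i) (c.length - (j - i)) ≤ G.dist (c.getVert i) (c.getVert j)

theorem IsGeodesicCycle.isQuasiGeodesic (hc : IsGeodesicCycle c) :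
    IsQuasiGeodesic G c.toSubgraph 1 := by
  have harc : ∀ i j, i ≤ j → j ≤ c.length → ∃ w : G.Walk (c.getVert i) (c.getVert j),
      w.toSubgraph ≤ c.toSubgraph ∧ w.length ≤ G.dist (c.getVert i) (c.getVert j) := by
    intro i j hij hj
    have hgeo := hc hij hj
    rcases le_total (j - i) (c.length - (j - i)) with h | h
    · rw [min_eq_left h] at hgeo
      exact ⟨subwalk c hij, toSubgraph_le_of_isSubwalk (subwalk_isSubwalk c hij),
        by rwa [length_subwalk c hij hj]⟩
    · rw [min_eq_right h] at hgeo
      refine ⟨((c.drop j).append (c.take i)).reverse, ?_, ?_⟩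
      · rw [Walk.toSubgraph_reverse, Walk.toSubgraph_append]
        exact sup_le (toSubgraph_le_of_isSubwalk (c.isSubwalk_drop j))
          (toSubgraph_le_of_isSubwalk (c.isSubwalk_take i))
      · simp only [Walk.length_reverse, Walk.length_append, Walk.drop_length, Walk.take_length]
        lia
  refine isQuasiGeodesic_of_exists_walk fun x hx y hy => ?_
  rw [Walk.mem_verts_toSubgraph] at hx hy
  obtain ⟨i, rfl, hi⟩ := Walk.mem_support_iff_exists_getVert.1 hx
  obtain ⟨j, rfl, hj⟩ := Walk.mem_support_iff_exists_getVert.1 hy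
  rw [one_mul]
  rcases le_total i j with h | h
  · exact harc i j h hj
  · obtain ⟨w, hw, hlen⟩ := harc j i h hi
    exact ⟨w.reverse, by rwa [Walk.toSubgraph_reverse],
      by rwa [Walk.length_reverse, dist_comm]⟩

theorem IsGeodesicCycle.eq_or_eq_zero_and_eq_length (hc : IsGeodesicCycle c) {i j : ℕ}
    (hij : i ≤ j) (hj : j ≤ c.length) (h : c.getVert i = c.getVert j) :
    i = j ∨ i = 0 ∧ j = c.length := by
  have := hc hij hj
  rw [h, dist_self] at this
  lia

theorem IsGeodesicCycle.isPath_of_isSubwalk (hc : IsGeodesicCycle c) {q : G.Walk x y}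
    (hq : q.IsSubwalk c) (hlt : q.length < c.length) : q.IsPath := by
  obtain ⟨r, s, rfl⟩ := hq
  have hget : ∀ m ≤ q.length,
      ((r.append q).append s).getVert (r.length + m) = q.getVert m := by
    intro m hm
    rw [Walk.getVert_append', Walk.length_append, if_pos (by lia), Walk.getVert_append,
      if_neg (by lia), Nat.add_sub_cancel_left]
  simp only [Walk.length_append] at hlt
  rw [← Walk.IsPath.getVert_injOn_iff]
  intro m hm n hn hmn
  simp only [Set.mem_ofPred_eq] at hm hn
  rw [← hget m hm, ← hget n hn] at hmn
  rcases le_total m n with h | h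
  · have := hc.eq_or_eq_zero_and_eq_length (by lia) (by simp only [Walk.length_append]; lia) hmn
    simp only [Walk.length_append] at this
    lia
  · have := hc.eq_or_eq_zero_and_eq_length (by lia) (by simp only [Walk.length_append]; lia)
      hmn.symm
    simp only [Walk.length_append] at this
    lia

theorem IsGeodesicCycle.containsQuasiGeodesicSubdivGE_triangleGraph (hc : IsGeodesicCycle c)
    (hlen : 3 * (k + 1) ≤ c.length) : ContainsQuasiGeodesicSubdivGE G k triangleGraph 1 := by
  have hle : k + 1 ≤ 2 * (k + 1) := by lia
  have hsub := length_subwalk c hle (by lia)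
  have hunion : (c.take (k + 1)).toSubgraph ⊔ (subwalk c hle).toSubgraph ⊔
      (c.drop (2 * (k + 1))).toSubgraph = c.toSubgraph := by
    rw [← Walk.toSubgraph_append, ← Walk.toSubgraph_append, take_append_subwalk_append_drop]
  refine ⟨_, isSubdivGE_triangleGraph (hc.isPath_of_isSubwalk (c.isSubwalk_take _) ?_)
    (hc.isPath_of_isSubwalk (subwalk_isSubwalk c hle) ?_)
    (hc.isPath_of_isSubwalk (c.isSubwalk_drop _) ?_) ?_ ?_ ?_ ?_ ?_ ?_,
    hunion ▸ hc.isQuasiGeodesic⟩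
  iterate 6
    simp only [Walk.take_length, Walk.drop_length, hsub]
    lia
  · intro w hw hw'
    obtain ⟨i, hi, rfl⟩ := (mem_support_take_iff c (by lia)).1 hw
    obtain ⟨j, hj, hj', hij⟩ := (mem_support_subwalk_iff c hle (by lia)).1 hw'
    obtain rfl | h := hc.eq_or_eq_zero_and_eq_length (by lia) (by lia) hij.symm
    · rw [le_antisymm hi hj]
    · lia
  · intro w hw hw'
    obtain ⟨i, hi, hi', rfl⟩ := (mem_support_subwalk_iff c hle (by lia)).1 hw
    obtain ⟨j, hj, hj', hij⟩ := (mem_support_drop_iff c (by lia)).1 hw'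
    obtain rfl | h := hc.eq_or_eq_zero_and_eq_length (by lia) (by lia) hij.symm
    · rw [le_antisymm hi' hj]
    · lia
  · intro w hw hw'
    obtain ⟨i, hi, hi', rfl⟩ := (mem_support_drop_iff c (by lia)).1 hw
    obtain ⟨j, hj, hij⟩ := (mem_support_take_iff c (by lia)).1 hw'
    obtain rfl | ⟨rfl, -⟩ := hc.eq_or_eq_zero_and_eq_length (by lia) (by lia) hij
    · lia
    · rw [← hij, c.getVert_zero]

end Cycles

section Claws

variable {G : SimpleGraph V} {u v o z : V} {p : G.Walk u v} {q : G.Walk o z} {k : ℕ}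

theorem dist_le_dist_of_nearest (hG : G.Connected) (hq : q.length = G.dist o z) {x y : V}
    (hnear : G.dist o z ≤ G.dist x z) (hy : y ∈ q.support) : G.dist o y ≤ G.dist x y := by
  have hoz := dist_add_dist_of_mem_support hq hy
  have hxz := hG.dist_triangle (u := x) (v := y) (w := z)
  lia

theorem isQuasiGeodesic_of_geodesic_leg (hG : G.Connected) (hp : p.length = G.dist u v)
    (hq : q.length = G.dist o z) (ho : o ∈ p.support)
    (hnear : ∀ x ∈ p.support, G.dist o z ≤ G.dist x z) :
    IsQuasiGeodesic G (p.toSubgraph ⊔ q.toSubgraph) 3 := by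
  have hmixed : ∀ x ∈ p.support, ∀ y ∈ q.support, ∃ w : G.Walk x y,
      w.toSubgraph ≤ p.toSubgraph ⊔ q.toSubgraph ∧ w.length ≤ 3 * G.dist x y := by
    intro x hx y hy
    obtain ⟨w, hw, hwlen⟩ := exists_geodesic_le_toSubgraph hp hx ho
    obtain ⟨w', hw', hwlen'⟩ := exists_geodesic_le_toSubgraph hq q.start_mem_support hy
    refine ⟨w.append w', ?_, ?_⟩
    · rw [Walk.toSubgraph_append]
      exact sup_le_sup hw hw'
    · have hoy := dist_le_dist_of_nearest hG hq (hnear x hx) hy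
      calc (w.append w').length = G.dist x o + G.dist o y := by
            rw [Walk.length_append, hwlen, hwlen']
        _ ≤ (G.dist x y + G.dist o y) + G.dist o y := by
            gcongr
            exact G.dist_comm (u := y) (v := o) ▸ hG.dist_triangle
        _ ≤ 3 * G.dist x y := by lia
  refine isQuasiGeodesic_of_exists_walk fun x hx y hy => ?_
  simp only [Subgraph.verts_sup, Set.mem_union, Walk.mem_verts_toSubgraph] at hx hy
  rcases hx with hx | hx <;> rcases hy with hy | hy
  · obtain ⟨w, hw, hwlen⟩ := exists_geodesic_le_toSubgraph hp hx hy
    exact ⟨w, hw.trans le_sup_left, by lia⟩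
  · exact hmixed x hx y hy
  · obtain ⟨w, hw, hwlen⟩ := hmixed y hy x hx
    exact ⟨w.reverse, by rwa [Walk.toSubgraph_reverse],
      by rwa [Walk.length_reverse, dist_comm]⟩
  · obtain ⟨w, hw, hwlen⟩ := exists_geodesic_le_toSubgraph hq hx hy
    exact ⟨w, hw.trans le_sup_right, by lia⟩

theorem containsQuasiGeodesicSubdivGE_clawGraph_of_geodesic_leg (hG : G.Connected)
    (hp : p.length = G.dist u v) (hq : q.length = G.dist o z) (ho : o ∈ p.support)
    (hnear : ∀ x ∈ p.support, G.dist o z ≤ G.dist x z) (huo : k + 1 ≤ G.dist u o)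
    (hov : k + 1 ≤ G.dist o v) (hoz : k + 1 ≤ G.dist o z) :
    ContainsQuasiGeodesicSubdivGE G k clawGraph 3 := by
  classical
  have hr := length_eq_dist_of_subwalk hp (p.isSubwalk_takeUntil ho)
  have hs := length_eq_dist_of_subwalk hp (p.isSubwalk_dropUntil ho)
  have hpath := p.isPath_of_length_eq_dist hp
  have hunion : (p.takeUntil o ho).reverse.toSubgraph ⊔ (p.dropUntil o ho).toSubgraph =
      p.toSubgraph := by
    rw [Walk.toSubgraph_reverse, ← Walk.toSubgraph_append, Walk.take_spec]
  have hpq : ∀ x ∈ p.support, x ∈ q.support → x = o := by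
    intro x hx hxq
    have hox := dist_le_dist_of_nearest hG hq (hnear x hx) hxq
    rw [dist_self, Nat.le_zero, hG.dist_eq_zero_iff] at hox
    exact hox.symm
  have hrs : ∀ x ∈ (p.takeUntil o ho).support, x ∈ (p.dropUntil o ho).support → x = o := by
    intro x hx hx'
    have hux := dist_add_dist_of_mem_support hr hx
    have hxv := dist_add_dist_of_mem_support hs hx'
    have huv := dist_add_dist_of_mem_support hp ho
    have hxuv := hG.dist_triangle (u := u) (v := x) (w := v)
    exact hG.dist_eq_zero_iff.1 (by lia)
  refine ⟨_, isSubdivGE_clawGraph (hpath.takeUntil ho).reverse (hpath.dropUntil ho)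
    (q.isPath_of_length_eq_dist hq) (by rwa [Walk.length_reverse, hr]) (by rwa [hs])
    (by rwa [hq]) ?_ ?_ ?_, hunion ▸ isQuasiGeodesic_of_geodesic_leg hG hp hq ho hnear⟩
  · simpa only [Walk.support_reverse, List.mem_reverse] using hrs
  · exact fun x hx => hpq x (p.support_dropUntil_subset_support ho hx)
  · simp only [Walk.support_reverse, List.mem_reverse]
    exact fun x hx hx' => hpq x (p.support_takeUntil_subset_support ho hx') hx

end Claws

section Weights

variable {G : SimpleGraph V} {A : Type*} [AddCommGroup A] {ω : V → V → A} {u v w x y : V}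

/-- The total weight of the darts of a walk, the dart from `x` to `y` having weight `ω x y`. For
antisymmetric `ω` this is a voltage assignment, and whether a closed walk has weight zero tells how
it winds around. -/
def weight (ω : V → V → A) (p : G.Walk u v) : A :=
  (p.darts.map fun d => ω d.fst d.snd).sum

theorem weight_append (p : G.Walk u v) (q : G.Walk v w) :
    weight ω (p.append q) = weight ω p + weight ω q := by
  simp only [weight, Walk.darts_append, List.map_append, List.sum_append]

theorem weight_cons (h : G.Adj u v) (p : G.Walk v w) :
    weight ω (.cons h p) = ω u v + weight ω p := rfl

theorem weight_reverse (hω : ∀ x y, ω y x = -ω x y) (p : G.Walk u v) :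
    weight ω p.reverse = -weight ω p := by
  induction p with
  | nil => simp [weight]
  | cons h p ih =>
    rw [Walk.reverse_cons, weight_append, ih, weight_cons, weight_cons, hω]
    simp [weight, add_comm]

theorem weight_eq_sub {χ : V → A} {p : G.Walk u v}
    (h : ∀ d ∈ p.darts, ω d.fst d.snd = χ d.snd - χ d.fst) : weight ω p = χ v - χ u := by
  induction p with
  | nil => simp [weight]
  | cons hadj p ih =>
    simp only [Walk.darts_cons, List.forall_mem_cons] at h
    rw [weight_cons, ih h.2, h.1]
    abel

theorem weight_eq_zero {p : G.Walk u v} (h : ∀ d ∈ p.darts, ω d.fst d.snd = 0) :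
    weight ω p = 0 :=
  List.sum_eq_zero (by simpa only [List.forall_mem_map] using h)

theorem three_le_length_of_weight_ne_zero (hω : ∀ x y, ω y x = -ω x y) {c : G.Walk u u}
    (hc : weight ω c ≠ 0) : 3 ≤ c.length := by
  match c with
  | .nil => exact (hc rfl).elim
  | .cons h .nil => exact (h.ne rfl).elim
  | .cons h (.cons h' .nil) =>
    refine (hc ?_).elim
    rw [weight_cons, weight_cons, hω, ← add_assoc, neg_add_cancel, zero_add]
    rfl
  | .cons _ (.cons _ (.cons _ _)) => simp only [Walk.length_cons]; lia

theorem exists_isGeodesicCycle_weight_ne_zero (hG : G.Connected) (hω : ∀ x y, ω y x = -ω x y)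
    {c : G.Walk u u} (hc : weight ω c ≠ 0) :
    ∃ (v : V) (α : G.Walk v v), IsGeodesicCycle α ∧ weight ω α ≠ 0 := by
  have hex : ∃ n, ∃ (v : V) (α : G.Walk v v), α.length = n ∧ weight ω α ≠ 0 := ⟨_, u, c, rfl, hc⟩
  classical
  obtain ⟨v, α, hlen, hα⟩ := Nat.find_spec hex
  have hmin : ∀ {x} (β : G.Walk x x), β.length < α.length → weight ω β = 0 := fun β hβ =>
    not_not.1 fun h => Nat.find_min hex (hlen ▸ hβ) ⟨_, β, rfl, h⟩
  refine ⟨v, α, fun i j hij hj => not_lt.1 fun hlt => hα ?_, hα⟩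
  obtain ⟨q, hq⟩ := hG.exists_walk_length_eq_dist (α.getVert i) (α.getVert j)
  have hsub := length_subwalk α hij hj
  have hinner : weight ω ((subwalk α hij).append q.reverse) = 0 :=
    hmin _ (by rw [Walk.length_append, Walk.length_reverse]; lia)
  have houter : weight ω (((α.take i).append q).append (α.drop j)) = 0 :=
    hmin _ (by simp only [Walk.length_append, Walk.take_length, Walk.drop_length]; lia)
  rw [← take_append_subwalk_append_drop α hij]
  simp only [weight_append, weight_reverse hω] at hinner houter ⊢
  rwa [add_neg_eq_zero.1 hinner]

theorem two_mul_dist_le_length {c : G.Walk u u} (hx : x ∈ c.support) (hy : y ∈ c.support) :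
    2 * G.dist x y ≤ c.length := by
  classical
  have hy' : y ∈ (c.rotate x hx).support := (c.mem_support_rotate_iff x hx).2 hy
  have hsplit := congrArg Walk.length (Walk.take_spec _ hy')
  have htake := dist_le ((c.rotate x hx).takeUntil y hy')
  have hdrop := dist_le ((c.rotate x hx).dropUntil y hy')
  rw [Walk.length_append, Walk.length_rotate] at hsplit
  rw [dist_comm] at hdrop
  lia

end Weights

section Projection

variable {G : SimpleGraph V} {u v x y : V} {p : G.Walk u v}

/-- The index of the first vertex of `p` among those nearest to `x`. -/
noncomputable def foot (p : G.Walk u v) (x : V) : ℕ :=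
  sInf {i | ∀ j, G.dist (p.getVert i) x ≤ G.dist (p.getVert j) x}

/-- The distance of `x` from the walk `p`. -/
noncomputable def height (p : G.Walk u v) (x : V) : ℕ :=
  G.dist (p.getVert (foot p x)) x

theorem height_le_dist_getVert (p : G.Walk u v) (x : V) (j : ℕ) :
    height p x ≤ G.dist (p.getVert j) x :=
  Nat.sInf_mem (s := {i | ∀ j, G.dist (p.getVert i) x ≤ G.dist (p.getVert j) x})
    ⟨Function.argmin fun i => G.dist (p.getVert i) x,
      fun j => Function.argmin_le (fun i => G.dist (p.getVert i) x) j⟩ j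

theorem foot_le_of_dist_le_height {i : ℕ} (h : G.dist (p.getVert i) x ≤ height p x) :
    foot p x ≤ i :=
  Nat.sInf_le fun j => h.trans (height_le_dist_getVert p x j)

theorem foot_le_length (p : G.Walk u v) (x : V) : foot p x ≤ p.length := by
  by_contra! h
  refine h.not_ge (foot_le_of_dist_le_height ?_)
  rw [height, p.getVert_of_length_le h.le, p.getVert_length]

theorem height_le_dist_of_mem_support (hy : y ∈ p.support) (x : V) : height p x ≤ G.dist y x := by
  obtain ⟨j, rfl, -⟩ := Walk.mem_support_iff_exists_getVert.1 hy
  exact height_le_dist_getVert p x j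

theorem height_eq_zero_of_mem_support (hx : x ∈ p.support) : height p x = 0 :=
  Nat.le_zero.1 (dist_self (G := G) (v := x) ▸ height_le_dist_of_mem_support hx x)

theorem height_le_height_add_dist (hG : G.Connected) (p : G.Walk u v) (x y : V) :
    height p y ≤ height p x + G.dist x y :=
  (height_le_dist_getVert p y (foot p x)).trans hG.dist_triangle

theorem foot_eq_of_mem_support_geodesic (hG : G.Connected)
    {q : G.Walk (p.getVert (foot p x)) x} (hq : q.length = height p x) (hy : y ∈ q.support) :
    foot p y = foot p x := by
  have hsplit : G.dist (p.getVert (foot p x)) y + G.dist y x = height p x :=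
    dist_add_dist_of_mem_support hq hy
  have hyx := height_le_height_add_dist hG p y x
  refine le_antisymm (foot_le_of_dist_le_height (by lia)) (foot_le_of_dist_le_height ?_)
  have hxy := height_le_dist_getVert p y (foot p x)
  exact hG.dist_triangle.trans (hsplit ▸ Nat.add_le_add_right hxy _)

theorem foot_getVert (hp : p.length = G.dist u v) {i : ℕ} (hi : i ≤ p.length) :
    foot p (p.getVert i) = i := by
  have hle : foot p (p.getVert i) ≤ i := foot_le_of_dist_le_height (by simp)
  have h0 : G.dist (p.getVert (foot p (p.getVert i))) (p.getVert i) = 0 :=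
    height_eq_zero_of_mem_support (p.getVert_mem_support i)
  rw [dist_getVert_getVert hp (hle.trans hi) hi] at h0
  lia

theorem foot_le_foot_add (hG : G.Connected) (hp : p.length = G.dist u v) (x y : V) :
    foot p y ≤ foot p x + (height p x + G.dist x y + height p y) := by
  have hfeet : G.dist (p.getVert (foot p x)) (p.getVert (foot p y)) ≤
      height p x + G.dist x y + height p y :=
    hG.dist_triangle.trans (add_le_add hG.dist_triangle (dist_comm (G := G) ▸ le_rfl))
  rw [dist_getVert_getVert hp (foot_le_length p x) (foot_le_length p y)] at hfeet
  lia

end Projection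

section PathDecompositions

variable {G : SimpleGraph V} {u v : V} {p : G.Walk u v} {r R : ℕ}

theorem induce_hasse_of_ordConnected {α : Type*} [PartialOrder α] {S : Set α}
    (hS : S.OrdConnected) : (hasse α).induce S = hasse S := by
  ext a b
  have hcov : ∀ a b : S, (a : α) ⋖ b ↔ a ⋖ b := fun a b =>
    Set.OrdConnected.apply_covBy_apply_iff (OrderEmbedding.subtype (· ∈ S))
      (by simpa only [OrderEmbedding.coe_subtype, Subtype.range_coe_subtype] using! hS)
  simp only [induce_adj, hasse_adj, hcov]

theorem connected_induce_pathGraph {n : ℕ} {S : Set (Fin n)} (hS : S.OrdConnected)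
    (hne : S.Nonempty) : ((pathGraph n).induce S).Connected := by
  have := hne.to_subtype
  exact ⟨induce_hasse_of_ordConnected hS ▸ hasse_preconnected_of_succ S⟩

/-- `G` has a decomposition modelled on a path and of radial width at most `R`. -/
def PathRadialWidthLE (G : SimpleGraph V) (R : ℕ) : Prop :=
  ∃ (n : ℕ) (B : Fin n → Set V), IsGraphDecomp G (pathGraph n) B ∧
    ∀ h, radiusLE (G.induce (B h)) R

theorem PathRadialWidthLE.mono {R' : ℕ} (h : PathRadialWidthLE G R) (hR : R ≤ R') :
    PathRadialWidthLE G R' := by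
  obtain ⟨n, B, hB, hrad⟩ := h
  refine ⟨n, B, hB, fun h hne => (hrad h hne).imp fun v hv w => (hv w).trans ?_⟩
  exact_mod_cast hR

theorem pathRadialWidthLE_of_dist_le (hG : G.Connected) (c : V) (hc : ∀ x, G.dist c x ≤ R) :
    PathRadialWidthLE G R := by
  refine ⟨1, fun _ => Set.univ, ⟨fun _ => ⟨0, trivial⟩, fun _ _ _ => ⟨0, trivial, trivial⟩,
    fun _ => connected_induce_pathGraph Set.ordConnected_univ ⟨0, trivial⟩⟩, fun _ => ?_⟩
  refine radiusLE_induce_of_exists_walk (c := c) trivial fun x _ => ?_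
  obtain ⟨w, hw⟩ := hG.exists_walk_length_eq_dist c x
  exact ⟨w, fun _ _ => trivial, hw ▸ hc x⟩

theorem exists_walk_foot_mem_uIcc (hG : G.Connected) (hp : p.length = G.dist u v) {i : ℕ}
    (hi : i ≤ p.length) (x : V) :
    ∃ w : G.Walk (p.getVert i) x, (∀ y ∈ w.support, foot p y ∈ Set.uIcc i (foot p x)) ∧
      w.length = G.dist (p.getVert i) (p.getVert (foot p x)) + height p x := by
  obtain ⟨s, hsp, hs⟩ := exists_geodesic_le_toSubgraph hp (p.getVert_mem_support i)
    (p.getVert_mem_support (foot p x))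
  obtain ⟨q, hq⟩ := hG.exists_walk_length_eq_dist (p.getVert (foot p x)) x
  refine ⟨s.append q, fun y hy => ?_, by rw [Walk.length_append, hs, hq, height]⟩
  rcases (Walk.mem_support_append_iff _ _).1 hy with hy | hy
  · have hyp : y ∈ p.support := by
      simpa only [Walk.mem_verts_toSubgraph] using hsp.1 (s.mem_verts_toSubgraph.2 hy)
    obtain ⟨m, rfl, hm⟩ := Walk.mem_support_iff_exists_getVert.1 hyp
    have hfx := foot_le_length p x
    have hsplit := dist_add_dist_of_mem_support hs hy
    rw [dist_getVert_getVert hp hi hm, dist_getVert_getVert hp hm hfx,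
      dist_getVert_getVert hp hi hfx] at hsplit
    rw [foot_getVert hp hm, Set.mem_uIcc]
    lia
  · rw [foot_eq_of_mem_support_geodesic hG hq hy]
    exact Set.right_mem_uIcc

theorem pathRadialWidthLE_of_height_le (hG : G.Connected) (hp : p.length = G.dist u v)
    (hr : ∀ x, height p x ≤ r) : PathRadialWidthLE G (2 * r + 1) := by
  let B : Fin (p.length + 1) → Set V := fun i =>
    {x | (i : ℕ) ≤ foot p x ∧ foot p x ≤ i + (2 * r + 1)}
  have hmem : ∀ x, x ∈ B ⟨foot p x, Nat.lt_succ_of_le (foot_le_length p x)⟩ :=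
    fun x => ⟨le_rfl, Nat.le_add_right _ _⟩
  refine ⟨_, B, ⟨fun x => ⟨_, hmem x⟩, fun x y hxy => ?_, fun x => ?_⟩, fun i => ?_⟩
  · have hgap : ∀ {a b}, G.Adj a b → foot p b ≤ foot p a + (2 * r + 1) := fun {a b} hab => by
      have hfoot := foot_le_foot_add hG hp a b
      have hra := hr a
      have hrb := hr b
      rw [dist_eq_one_iff_adj.2 hab] at hfoot
      lia
    rcases le_total (foot p x) (foot p y) with h | h
    · exact ⟨_, hmem x, h, hgap hxy⟩
    · exact ⟨_, ⟨h, hgap hxy.symm⟩, hmem y⟩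
  · refine connected_induce_pathGraph ⟨fun a ha b hb c hc => ?_⟩ ⟨_, hmem x⟩
    exact ⟨(Fin.le_def.1 hc.2).trans hb.1, ha.2.trans (Nat.add_le_add_right hc.1 _)⟩
  · obtain ⟨m, hm⟩ : ∃ m, m = min (i + (r + 1)) p.length := ⟨_, rfl⟩
    have hmp : m ≤ p.length := by lia
    refine radiusLE_induce_of_exists_walk (c := p.getVert m) ?_ fun x ⟨hx, hx'⟩ => ?_
    · simp only [B, Set.mem_ofPred_eq, foot_getVert hp hmp]
      lia
    · obtain ⟨w, hw, hlen⟩ := exists_walk_foot_mem_uIcc hG hp hmp x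
      have hxp := foot_le_length p x
      have hxr := hr x
      rw [dist_getVert_getVert hp hmp hxp] at hlen
      refine ⟨w, fun y hy => ?_, by lia⟩
      have hy' := Set.mem_uIcc.1 (hw y hy)
      simp only [B, Set.mem_ofPred_eq]
      lia

end PathDecompositions

section CrossingCycles

variable {G : SimpleGraph V} {A : Type*} [AddCommGroup A] {S : Set V} {χ : V → A} {u x y : V}

open Classical in
/-- The voltage assignment that is the coboundary of `χ` inside `S` and vanishes on all darts that
leave or avoid `S`. -/
noncomputable def coboundaryOn (S : Set V) (χ : V → A) (x y : V) : A :=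
  if x ∈ S ∧ y ∈ S then χ y - χ x else 0

theorem coboundaryOn_swap (x y : V) : coboundaryOn S χ y x = -coboundaryOn S χ x y := by
  classical
  rw [coboundaryOn, coboundaryOn, apply_ite Neg.neg, neg_sub, neg_zero]
  exact if_congr and_comm rfl rfl

theorem coboundaryOn_ne_zero_iff :
    coboundaryOn S χ x y ≠ 0 ↔ x ∈ S ∧ y ∈ S ∧ χ x ≠ χ y := by
  classical
  rw [coboundaryOn, ne_eq, ite_eq_right_iff, Classical.not_imp, sub_eq_zero, and_assoc,
    eq_comm (a := χ y)]

theorem weight_coboundaryOn_eq_zero {c : G.Walk u u} (hc : ∀ z ∈ c.support, z ∈ S) :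
    weight (coboundaryOn S χ) c = 0 := by
  rw [weight_eq_sub (χ := χ), sub_self]
  exact fun d hd => if_pos ⟨hc _ (c.dart_fst_mem_support_of_mem_darts hd),
    hc _ (c.dart_snd_mem_support_of_mem_darts hd)⟩

theorem exists_isGeodesicCycle_of_adj (hG : G.Connected) (hxy : G.Adj x y) (hx : x ∈ S)
    (hy : y ∈ S) (hχ : χ x ≠ χ y) {q : G.Walk y x}
    (hq : ∀ d ∈ q.darts, d.fst ∈ S → d.snd ∈ S → χ d.fst = χ d.snd) :
    ∃ (v : V) (α : G.Walk v v), IsGeodesicCycle α ∧ 3 ≤ α.length ∧ (∃ z ∈ α.support, z ∉ S) ∧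
      ∃ d ∈ α.darts, d.fst ∈ S ∧ d.snd ∈ S ∧ χ d.fst ≠ χ d.snd := by
  have hqweight : weight (coboundaryOn S χ) q = 0 := weight_eq_zero fun d hd =>
    not_not.1 fun h => by
      obtain ⟨hd₁, hd₂, hne⟩ := coboundaryOn_ne_zero_iff.1 h
      exact hne (hq d hd hd₁ hd₂)
  have hweight : weight (coboundaryOn S χ) (.cons hxy q) ≠ 0 := by
    rw [weight_cons, hqweight, add_zero, coboundaryOn_ne_zero_iff]
    exact ⟨hx, hy, hχ⟩
  obtain ⟨v, α, hgeo, hα⟩ :=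
    exists_isGeodesicCycle_weight_ne_zero hG coboundaryOn_swap hweight
  refine ⟨v, α, hgeo, three_le_length_of_weight_ne_zero coboundaryOn_swap hα, ?_, ?_⟩
  · by_contra! hS
    exact hα (weight_coboundaryOn_eq_zero hS)
  · by_contra! hd
    refine hα (weight_eq_zero fun d hdα => not_not.1 fun h => ?_)
    obtain ⟨hd₁, hd₂, hne⟩ := coboundaryOn_ne_zero_iff.1 h
    exact hne (hd d hdα hd₁ hd₂)

end CrossingCycles

section FarVertices

variable {G : SimpleGraph V} {u v x y : V} {p : G.Walk u v} {m : ℕ}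

theorem exists_walk_foot_eq_or_height_eq_zero (hG : G.Connected) (hp : p.length = G.dist u v)
    (x y : V) : ∃ q : G.Walk x y, ∀ d ∈ q.darts,
      foot p d.fst = foot p d.snd ∨ height p d.fst = 0 := by
  obtain ⟨a, ha⟩ := hG.exists_walk_length_eq_dist (p.getVert (foot p x)) x
  obtain ⟨b, hb⟩ := hG.exists_walk_length_eq_dist (p.getVert (foot p y)) y
  obtain ⟨s, hsp, -⟩ := exists_geodesic_le_toSubgraph hp (p.getVert_mem_support (foot p x))
    (p.getVert_mem_support (foot p y))
  refine ⟨(a.reverse.append s).append b, fun d hd => ?_⟩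
  simp only [Walk.darts_append, List.mem_append] at hd
  rcases hd with (hd | hd) | hd
  · have hfst := Walk.dart_fst_mem_support_of_mem_darts _ hd
    have hsnd := Walk.dart_snd_mem_support_of_mem_darts _ hd
    rw [Walk.support_reverse, List.mem_reverse] at hfst hsnd
    exact Or.inl ((foot_eq_of_mem_support_geodesic hG ha hfst).trans
      (foot_eq_of_mem_support_geodesic hG ha hsnd).symm)
  · refine Or.inr (height_eq_zero_of_mem_support (p.mem_verts_toSubgraph.1 (hsp.1 ?_)))
    exact s.mem_verts_toSubgraph.2 (s.dart_fst_mem_support_of_mem_darts hd)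
  · exact Or.inl ((foot_eq_of_mem_support_geodesic hG hb
      (b.dart_fst_mem_support_of_mem_darts hd)).trans
      (foot_eq_of_mem_support_geodesic hG hb (b.dart_snd_mem_support_of_mem_darts hd)).symm)

theorem le_or_length_le_of_dist_le_height (hG : G.Connected) (hp : p.length = G.dist u v)
    (hclaw : ¬ ContainsQuasiGeodesicSubdivGE G m clawGraph 3) (hx : m < height p x) {i : ℕ}
    (hi : i ≤ p.length) (hix : G.dist (p.getVert i) x ≤ height p x) :
    i ≤ m ∨ p.length ≤ i + m := by
  by_contra! h
  obtain ⟨q, hq⟩ := hG.exists_walk_length_eq_dist (p.getVert i) x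
  have hleft := dist_getVert_getVert hp (Nat.zero_le _) hi
  have hright := dist_getVert_getVert hp hi le_rfl
  rw [p.getVert_zero] at hleft
  rw [p.getVert_length] at hright
  refine hclaw (containsQuasiGeodesicSubdivGE_clawGraph_of_geodesic_leg hG hp hq
    (p.getVert_mem_support i) (fun y hy => hix.trans (height_le_dist_of_mem_support hy x))
    (by lia) (by lia) ?_)
  exact hx.trans_le (height_le_dist_getVert p x i)

theorem two_mul_lt_height_of_adj (hG : G.Connected) (hp : p.length = G.dist u v)
    (hlen : 6 * m + 3 ≤ p.length) (hclaw : ¬ ContainsQuasiGeodesicSubdivGE G m clawGraph 3)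
    (hxy : G.Adj x y) (hx : m < height p x) (hy : m < height p y)
    (hside : ¬(foot p x ≤ m ↔ foot p y ≤ m)) : 2 * m < height p x := by
  have hdist := dist_eq_one_iff_adj.2 hxy
  have hfootx := le_or_length_le_of_dist_le_height hG hp hclaw hx (foot_le_length p x) le_rfl
  have hfooty := le_or_length_le_of_dist_le_height hG hp hclaw hy (foot_le_length p y) le_rfl
  have hheight := height_le_height_add_dist hG p x y
  have hfoot := foot_le_foot_add hG hp x y
  have hfoot' := foot_le_foot_add hG hp y x
  rw [G.dist_comm] at hfoot'
  lia

theorem foot_le_iff_foot_le_of_adj (hG : G.Connected) (hp : p.length = G.dist u v)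
    (hlen : 6 * m + 3 ≤ p.length) (hclaw : ¬ ContainsQuasiGeodesicSubdivGE G m clawGraph 3)
    (hcycle : ∀ (w : V) (c : G.Walk w w), IsGeodesicCycle c → 3 ≤ c.length →
      c.length < 2 * (m + 1))
    (hxy : G.Adj x y) (hx : m < height p x) (hy : m < height p y) :
    foot p x ≤ m ↔ foot p y ≤ m := by
  by_contra hside
  let χ : V → ℤ := {z | foot p z ≤ m}.indicator 1
  have hχ : ∀ {a b}, χ a ≠ χ b ↔ ¬(foot p a ≤ m ↔ foot p b ≤ m) := by
    intro a b
    by_cases ha : foot p a ≤ m <;> by_cases hb : foot p b ≤ m <;>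
      simp [χ, ha, hb]
  obtain ⟨q, hq⟩ := exists_walk_foot_eq_or_height_eq_zero hG hp y x
  have hqχ : ∀ d ∈ q.darts, m < height p d.fst → χ d.fst = χ d.snd := by
    intro d hd hfar
    rcases hq d hd with h | h
    · exact not_not.1 fun hne => hχ.1 hne (by rw [h])
    · lia
  obtain ⟨w, α, hα, hlenα, ⟨z, hzα, hz⟩, d, hdα, hd₁, hd₂, hdχ⟩ :=
    exists_isGeodesicCycle_of_adj (S := {z | m < height p z}) hG hxy hx hy (hχ.2 hside)
      fun d hd hd₁ _ => hqχ d hd hd₁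
  have hheight := two_mul_lt_height_of_adj hG hp hlen hclaw d.adj hd₁ hd₂ (hχ.1 hdχ)
  have hzd := height_le_height_add_dist hG p z d.fst
  have hround := two_mul_dist_le_length hzα (α.dart_fst_mem_support_of_mem_darts hdα)
  have hshort := hcycle w α hα hlenα
  rw [Set.mem_ofPred_eq] at hz
  lia

theorem foot_near_end_of_adj (hG : G.Connected) (hp : p.length = G.dist u v)
    (hlen : 6 * m + 3 ≤ p.length) (hclaw : ¬ ContainsQuasiGeodesicSubdivGE G m clawGraph 3)
    (hxy : G.Adj x y) (hx : m < height p x) (hy : height p y ≤ m) :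
    (foot p y ≤ m ∨ p.length ≤ foot p y + m) ∧ (foot p y ≤ m ↔ foot p x ≤ m) := by
  have hdist := dist_eq_one_iff_adj.2 hxy
  have hdist' := dist_eq_one_iff_adj.2 hxy.symm
  have hy_end : foot p y ≤ m ∨ p.length ≤ foot p y + m := by
    refine le_or_length_le_of_dist_le_height hG hp hclaw hx (foot_le_length p y) ?_
    calc G.dist (p.getVert (foot p y)) x ≤ height p y + G.dist y x := hG.dist_triangle
      _ ≤ height p x := by lia
  have hx_end := le_or_length_le_of_dist_le_height hG hp hclaw hx (foot_le_length p x) le_rfl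
  have hheight := height_le_height_add_dist hG p y x
  have hfoot := foot_le_foot_add hG hp x y
  have hfoot' := foot_le_foot_add hG hp y x
  exact ⟨hy_end, by lia⟩

theorem height_le_three_mul (hG : G.Connected) (hp : p.length = G.dist u v)
    (hdiam : ∀ x y, G.dist x y ≤ p.length) (hlen : 6 * m + 3 ≤ p.length)
    (hclaw : ¬ ContainsQuasiGeodesicSubdivGE G m clawGraph 3)
    (hcycle : ∀ (w : V) (c : G.Walk w w), IsGeodesicCycle c → 3 ≤ c.length →
      c.length < 2 * (m + 1))
    (z : V) : height p z ≤ 3 * m := by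
  by_contra! hz
  obtain ⟨e, he, hopp⟩ : ∃ e ≤ p.length, ∀ i, (i ≤ m ∨ p.length ≤ i + m) →
      (i ≤ m ↔ foot p z ≤ m) → p.length ≤ i - e + (e - i) + m := by
    by_cases h : foot p z ≤ m
    · exact ⟨p.length, le_rfl, by lia⟩
    · exact ⟨0, Nat.zero_le _, by lia⟩
  obtain ⟨ρ, hρ⟩ := hG.exists_walk_length_eq_dist z (p.getVert e)
  obtain ⟨d, hdρ, ⟨hx, hside⟩, hy⟩ := ρ.exists_boundary_dart
    {x | m < height p x ∧ (foot p x ≤ m ↔ foot p z ≤ m)} ⟨by lia, Iff.rfl⟩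
    (fun h => by simp [height_eq_zero_of_mem_support (p.getVert_mem_support e)] at h)
  have hy : height p d.snd ≤ m := by
    by_contra! hfar
    exact hy ⟨hfar,
      (foot_le_iff_foot_le_of_adj hG hp hlen hclaw hcycle d.adj hx hfar).symm.trans hside⟩
  obtain ⟨hend_y, hside_y⟩ := foot_near_end_of_adj hG hp hlen hclaw d.adj hx hy
  have hsplit := dist_add_dist_of_mem_support hρ (ρ.dart_snd_mem_support_of_mem_darts hdρ)
  have hfoot_dist : G.dist (p.getVert (foot p d.snd)) (p.getVert e) ≤
      height p d.snd + G.dist d.snd (p.getVert e) := hG.dist_triangle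
  rw [dist_getVert_getVert hp (foot_le_length p _) he] at hfoot_dist
  have hzy := height_le_height_add_dist hG p d.snd z
  rw [G.dist_comm] at hzy
  have hfar := hopp _ hend_y (hside_y.trans hside)
  have hze := hdiam z (p.getVert e)
  lia

end FarVertices

theorem exists_path_decomposition_of_connected_general {V : Type*} [Nonempty V] (k : ℕ)
    (G : SimpleGraph V) (hdiam : G.ediam ≠ ⊤)
    (hK3 : ¬ ContainsQuasiGeodesicSubdivGE G k triangleGraph 1)
    (hclaw : ¬ ContainsQuasiGeodesicSubdivGE G (3 * k) clawGraph 3) :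
    PathRadialWidthLE G (18 * k + 2) := by
  have hG : G.Connected := connected_of_ediam_ne_top hdiam
  have hcycle : ∀ (w : V) (c : G.Walk w w), IsGeodesicCycle c → 3 ≤ c.length →
      c.length < 2 * (3 * k + 1) := by
    intro w c hc h3
    by_contra! hlen
    exact hK3 (hc.containsQuasiGeodesicSubdivGE_triangleGraph (by lia))
  obtain ⟨u, v, huv⟩ := G.exists_dist_eq_diam
  have hdist : ∀ x y, G.dist x y ≤ G.dist u v := fun x y => huv ▸ dist_le_diam hdiam
  obtain ⟨p, hp⟩ := hG.exists_walk_length_eq_dist u v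
  rcases le_or_gt p.length (18 * k + 2) with hshort | hlong
  · exact pathRadialWidthLE_of_dist_le hG u fun x => (hdist u x).trans (hp ▸ hshort)
  · have hheight := height_le_three_mul hG hp (hp ▸ hdist) (by lia) hclaw hcycle
    exact (pathRadialWidthLE_of_height_le hG hp hheight).mono (by lia)

/-- Let `k : ℕ`. If a connected graph `G` contains no `(≥ k)`-subdivision
of the triangle `K³` as a geodesic subgraph and no `(≥ 3k)`-subdivision of the claw
`K_{1,3}` as a `3`-quasi-geodesic subgraph, then there is a path `P` and a
`P`-decomposition of `G` of radial width at most `18k + 2`. -/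
theorem exists_path_decomposition_of_connected
    {V : Type*} [Fintype V] (k : ℕ) (G : SimpleGraph V) (hG : G.Connected)
    (hK3 : ¬ ContainsQuasiGeodesicSubdivGE G k triangleGraph 1)
    (hclaw : ¬ ContainsQuasiGeodesicSubdivGE G (3 * k) clawGraph 3) :
    ∃ (n : ℕ) (B : Fin n → Set V),
      IsGraphDecomp G (SimpleGraph.pathGraph n) B ∧
      ∀ h, radiusLE (G.induce (B h)) (18 * k + 2) := by
  have := hG.nonempty
  exact exists_path_decomposition_of_connected_general k G (connected_iff_ediam_ne_top.1 hG) hK3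
    hclaw

end RadialPaper
end
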